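/- arXiv:2508.11577 — 2 statements merged into one kernel-verified Lean document; each statement's English description precedes it below -/
import Mathlib

section
/- Main dimension theorem for winning sets: Let n ∈ ℕ, let A be a diagonal (n×n)-matrix with diagonal entries β₁₁,…,β_nn ∈ (0,1/5), let α, c ∈ (0,1) and ρ₂ > 0. Suppose there exists δ ∈ (0,1) such that α^c ≤ δ²(1 − (∏_{j=1}^n β_jj)^{1−c}) and 3^{−n}∏_{j=1}^n (1 − 5β_jj^{⌊δα^{−1}⌋}) > 8^n(1 + 2^{2n+1})δ. Then for every S ∈ 𝒮(α,A,c,ρ₂) and every y ∈ ℝ^n, the set S ∩ (A(B[0,ρ₂]) + y) is non-empty and dim_H(S ∩ (A(B[0,ρ₂]) + y)) ≥ max{n − K₁·α/|log β_max|, 0}, where β_max = max_{1≤j≤n} β_jj and K₁ = 2δ^{−1}·|log(3^{−n}∏_{j=1}^n (1 − 5β_jj^{⌊δα^{−1}⌋}) − 8^n(1 + 2^{2n+1})δ)|. -/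
open scoped ENNReal

/-- The axis-parallel closed box `A^t(B[0,r]) + y`, where `A` is the diagonal matrix with
diagonal entries `β j`: the set of `x` with `|x j - y j| ≤ (β j)^t * r` for every `j`. -/
def gameBox {n : ℕ} (β : Fin n → ℝ) (t r : ℝ) (y : Fin n → ℝ) : Set (Fin n → ℝ) :=
  {x | ∀ j, |x j - y j| ≤ β j ^ t * r}

/-- A legal move of Player II on turn `m + 1` (turns are indexed from `1` in the paper) of the
`(α, A, c, ρ₂, ρ₁)`-potential game: an at most countable collection of pairs `(q, y)` with
`q ≥ 1`, satisfying, when `c > 0`,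
`Σ (∏_j β_j^q)^c ≤ (α ∏_j β_j^(m+1))^c`, and, when `c = 0`, consisting of at most one pair
`(q, y)`, which must satisfy `∏_j β_j^q ≤ α ∏_j β_j^(m+1)`. The empty collection (a skip) is
always legal. -/
def LegalMove {n : ℕ} (β : Fin n → ℝ) (α c : ℝ) (m : ℕ)
    (M : Set (ℝ × (Fin n → ℝ))) : Prop :=
  M.Countable ∧ (∀ p ∈ M, 1 ≤ p.1) ∧
    (if 0 < c then
      ∑' p : M, ENNReal.ofReal ((∏ j, β j ^ p.1.1) ^ c)
        ≤ ENNReal.ofReal ((α * ∏ j, β j ^ (m + 1 : ℝ)) ^ c)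
    else
      M.Subsingleton ∧ ∀ p ∈ M, (∏ j, β j ^ p.1) ≤ α * ∏ j, β j ^ (m + 1 : ℝ))

/-- `S` is a winning set for Player II in the `(α, A, c, ρ₂, ρ₁)`-potential game, where `A` is
the diagonal matrix with diagonal entries `β j`.  Player I's play on turn `m + 1` is
`U_{m+1} = A^{m+1}(B[0,r]) + b m` with `ρ₂ ≤ r ≤ ρ₁` and `U_{m+2} ⊆ U_{m+1}`; a strategy for
Player II assigns to every finite history (the radius `r` together with the centres
`b 0, …, b m` of Player I's plays so far) a collection of pairs `(q, y)`, which must be a legal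
move whenever the history is legal.  The strategy is winning for `S` if for every legal infinite
play in which Player II follows it, every point `x` of `⋂ U_m` which avoids the deleted region
`⋃_m ⋃_{(q,y)} (A^q(B[0,r]) + y)` lies in `S`. -/
def IsWinning {n : ℕ} (β : Fin n → ℝ) (α c ρ₂ ρ₁ : ℝ) (S : Set (Fin n → ℝ)) : Prop :=
  ∃ σ : ℝ → (m : ℕ) → (Fin (m + 1) → (Fin n → ℝ)) → Set (ℝ × (Fin n → ℝ)),
    (∀ (r : ℝ) (m : ℕ) (b : Fin (m + 1) → (Fin n → ℝ)),
      ρ₂ ≤ r → r ≤ ρ₁ →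
      (∀ i : Fin m,
        gameBox β ((i : ℕ) + 2 : ℝ) r (b i.succ) ⊆ gameBox β ((i : ℕ) + 1 : ℝ) r (b i.castSucc)) →
      LegalMove β α c m (σ r m b)) ∧
    (∀ (r : ℝ) (b : ℕ → (Fin n → ℝ)),
      ρ₂ ≤ r → r ≤ ρ₁ →
      (∀ m : ℕ, gameBox β ((m : ℕ) + 2 : ℝ) r (b (m + 1)) ⊆ gameBox β ((m : ℕ) + 1 : ℝ) r (b m)) →
      ∀ x : Fin n → ℝ, (∀ m : ℕ, x ∈ gameBox β ((m : ℕ) + 1 : ℝ) r (b m)) →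
        x ∉ ⋃ (m : ℕ), ⋃ p ∈ σ r m (fun i : Fin (m + 1) => b (i : ℕ)), gameBox β p.1 r p.2 →
        x ∈ S)

/-- The family `𝒮(α, A, c, ρ₂)` of sets that are `(α, A, c, ρ₂, ρ₁)`-winning for some
`ρ₁ ≥ ρ₂`. -/
def winFamily {n : ℕ} (β : Fin n → ℝ) (α c ρ₂ : ℝ) : Set (Set (Fin n → ℝ)) :=
  {S | ∃ ρ₁ : ℝ, ρ₂ ≤ ρ₁ ∧ IsWinning β α c ρ₂ ρ₁ S}

/-! Let Player I only ever play the overlapping cells of a forest of lattice boxes, in which the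
parent of an index `z` is the rounding of `A z`. Call a node good if the deletions of earlier turns
still meeting its cell have total relative `c`-weight at most `δ`. A first moment count over the
descendants `N = ⌊δ / α⌋` levels below a good node, in which deletions much larger than a cell are
truncated and counted by the cells they meet, shows that at least `κ ∏ j, β j ^ (-N)` of them are
good again, where `κ` is the number whose logarithm enters `K₁`. A branch which meets good nodes
infinitely often ends in a point outside the deleted region, as a single deletion surviving along
it would have unbounded relative weight. So `S` contains a Cantor set coded by words over
`⌈κ ∏ j, β j ^ (-N)⌉` letters, and the mass distribution principle for the uniform Bernoulli
measure on these words bounds its dimension from below. -/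

open MeasureTheory

section MassDistribution

variable {X : Type*} [MetricSpace X] [MeasurableSpace X] {μ : Measure X} {C t r₀ : ℝ}

lemma measure_le_ediam_rpow_of_measure_closedBall_le (hC : 0 ≤ C) (ht : 0 < t) (hr₀ : 0 < r₀)
    (hball : ∀ x r, 0 < r → r ≤ r₀ → μ (Metric.closedBall x r) ≤ ENNReal.ofReal (C * r ^ t))
    {s : Set X} (hs : Metric.ediam s ≤ ENNReal.ofReal (r₀ / 2)) :
    μ s ≤ ENNReal.ofReal C * Metric.ediam s ^ t := by
  rcases s.eq_empty_or_nonempty with rfl | ⟨x, hx⟩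
  · simp
  have hfin : Metric.ediam s ≠ ∞ := ne_top_of_le_ne_top ENNReal.ofReal_ne_top hs
  set d := (Metric.ediam s).toReal
  have hd₀ : 0 ≤ d := ENNReal.toReal_nonneg
  have hdr : d < r₀ := (ENNReal.toReal_le_of_le_ofReal (by positivity) hs).trans_lt (by linarith)
  have hcont : ContinuousAt (fun r : ℝ => ENNReal.ofReal (C * r ^ t)) d :=
    ENNReal.continuous_ofReal.continuousAt.comp
      ((Real.continuousAt_rpow_const d t (Or.inr ht.le)).const_mul C)
  have hsub (r : ℝ) (hr : d < r) : s ⊆ Metric.closedBall x r := fun z hz => by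
    rw [Metric.mem_closedBall, dist_edist]
    exact (ENNReal.toReal_mono hfin (Metric.edist_le_ediam_of_mem hz hx)).trans hr.le
  calc μ s ≤ ENNReal.ofReal (C * d ^ t) := by
        refine ge_of_tendsto (hcont.tendsto.mono_left nhdsWithin_le_nhds)
          (Filter.eventually_of_mem (Ioo_mem_nhdsGT hdr) fun r hr => ?_)
        exact (measure_mono (hsub r hr.1)).trans (hball x r (hd₀.trans_lt hr.1) hr.2.le)
    _ = ENNReal.ofReal C * Metric.ediam s ^ t := by
        rw [ENNReal.ofReal_mul hC, ← ENNReal.ofReal_rpow_of_nonneg hd₀ ht.le,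
          ENNReal.ofReal_toReal hfin]

theorem le_dimH_of_measure_closedBall_le [BorelSpace X] {E : Set X} (hE : μ E ≠ 0)
    (hC : 0 < C) (hr₀ : 0 < r₀)
    (hball : ∀ x r, 0 < r → r ≤ r₀ → μ (Metric.closedBall x r) ≤ ENNReal.ofReal (C * r ^ t)) :
    ENNReal.ofReal t ≤ dimH E := by
  rcases le_or_gt t 0 with ht | ht
  · simp [ENNReal.ofReal_of_nonpos ht]
  have hC₀ : ENNReal.ofReal C ≠ 0 := by simpa using hC
  have hle : (ENNReal.ofReal C)⁻¹ • μ ≤ μH[t] := by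
    refine Measure.le_hausdorffMeasure t _ (ENNReal.ofReal (r₀ / 2)) (by simpa) fun s hs => ?_
    calc (ENNReal.ofReal C)⁻¹ * μ s
        ≤ (ENNReal.ofReal C)⁻¹ * (ENNReal.ofReal C * Metric.ediam s ^ t) := by
          gcongr
          exact measure_le_ediam_rpow_of_measure_closedBall_le hC.le ht hr₀ hball hs
      _ = Metric.ediam s ^ t := by
          rw [← mul_assoc, ENNReal.inv_mul_cancel hC₀ ENNReal.ofReal_ne_top, one_mul]
  refine le_dimH_of_hausdorffMeasure_ne_zero (d := t.toNNReal) ?_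
  rw [Real.coe_toNNReal _ ht.le]
  have hpos : 0 < (ENNReal.ofReal C)⁻¹ * μ E :=
    ENNReal.mul_pos (ENNReal.inv_ne_zero.2 ENNReal.ofReal_ne_top) hE
  exact (hpos.trans_le (hle E)).ne'

end MassDistribution

section Digits

/-- The uniform Bernoulli measure on infinite words over `M` letters. -/
noncomputable def digitMeasure (M : ℕ) [NeZero M] : Measure (ℕ → Fin M) :=
  Measure.infinitePi fun _ => (PMF.uniformOfFintype (Fin M)).toMeasure

instance (M : ℕ) [NeZero M] : IsProbabilityMeasure (digitMeasure M) := by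
  unfold digitMeasure; infer_instance

lemma digitMeasure_cylinder {M k : ℕ} [NeZero M] (w : Fin k → Fin M) :
    digitMeasure M {ω | (fun i : Fin k => ω i) = w} = (M : ℝ≥0∞)⁻¹ ^ k := by
  let a : ℕ → Fin M := fun i => if h : i < k then w ⟨i, h⟩ else 0
  have hcyl : {ω : ℕ → Fin M | (fun i : Fin k => ω i) = w}
      = Set.pi (Finset.range k : Set ℕ) fun i => {a i} := by
    ext ω
    simp +contextual [a, funext_iff, Fin.forall_iff, Set.mem_pi]
  rw [hcyl, digitMeasure,
    Measure.infinitePi_pi _ (fun _ _ => MeasurableSet.singleton _)]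
  simp

lemma digitMeasure_le_card_mul {M k : ℕ} [NeZero M] (A : Set (ℕ → Fin M))
    (W : Finset (Fin k → Fin M)) (hW : ∀ ω ∈ A, (fun i : Fin k => ω i) ∈ W) :
    digitMeasure M A ≤ W.card * (M : ℝ≥0∞)⁻¹ ^ k := by
  calc digitMeasure M A
      ≤ digitMeasure M (⋃ w ∈ W, {ω | (fun i : Fin k => ω i) = w}) :=
        measure_mono fun ω hω => by simpa using hW ω hω
    _ ≤ ∑ w ∈ W, digitMeasure M {ω | (fun i : Fin k => ω i) = w} := measure_biUnion_finset_le _ _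
    _ = W.card * (M : ℝ≥0∞)⁻¹ ^ k := by simp only [digitMeasure_cylinder, Finset.sum_const,
          nsmul_eq_mul]

end Digits

section BackwardOrbits

variable {Z : Type*} {f : Z → Z}

lemma iterate_backward_orbit {v : ℕ → Z} (hv : ∀ m, f (v (m + 1)) = v m) (m l : ℕ) :
    f^[l] (v (m + l)) = v m := by
  induction l with
  | zero => rfl
  | succ l ih => rw [Function.iterate_succ_apply, ← add_assoc, hv, ih]

lemma exists_backward_orbit_of_iterate {N : ℕ} (hN : 0 < N) {w : ℕ → Z}
    (hw : ∀ k, f^[N] (w (k + 1)) = w k) :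
    ∃ v : ℕ → Z, (∀ m, f (v (m + 1)) = v m) ∧ ∀ k, v (k * N) = w k := by
  have hle (m : ℕ) : m ≤ m * N := Nat.le_mul_of_pos_right m hN
  refine ⟨fun m => f^[m * N - m] (w m), fun m => ?_, fun k => ?_⟩
  · have hexp : ((m + 1) * N - (m + 1)).succ = (m * N - m) + N := by
      have := hle m
      rw [add_mul, one_mul]
      omega
    rw [← Function.iterate_succ_apply' f, hexp, Function.iterate_add_apply, hw]
  · obtain ⟨j, hj⟩ := Nat.exists_eq_add_of_le (hle k)
    have hexp : k * N * N - k * N = N * j := by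
      rw [← Nat.sub_mul, mul_comm N]
      congr 1
      omega
    change f^[k * N * N - k * N] (w (k * N)) = w k
    rw [hexp, Function.iterate_mul, hj]
    exact iterate_backward_orbit (f := f^[N]) hw k j

lemma exists_injective_coding {G : ℕ → Z → Prop} {M : ℕ} {z₀ : Z} (hz₀ : G 0 z₀)
    (hG : ∀ k z, G k z → ∃ T : Finset Z, M ≤ T.card ∧ ∀ v ∈ T, f v = z ∧ G (k + 1) v) :
    ∃ code : ∀ k, (Fin k → Fin M) → Z,
      (∀ k, Function.Injective (code k)) ∧ (∀ w, code 0 w = z₀) ∧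
      (∀ k w, f (code (k + 1) w) = code k (Fin.init w)) ∧ ∀ k w, G k (code k w) := by
  have hchild (k : ℕ) (z : Z) : ∃ child : Fin M → Z, G k z →
      Function.Injective child ∧ ∀ a, f (child a) = z ∧ G (k + 1) (child a) := by
    by_cases hz : G k z
    · obtain ⟨T, hcard, hT⟩ := hG k z hz
      obtain ⟨e⟩ := Function.Embedding.nonempty_of_card_le
        (show Fintype.card (Fin M) ≤ Fintype.card T by simpa using hcard)
      exact ⟨fun a => e a, fun _ => ⟨Subtype.val_injective.comp e.injective,
        fun a => hT _ (e a).2⟩⟩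
    · exact ⟨fun _ => z₀, fun h => absurd h hz⟩
  choose child hchild using hchild
  let code : ∀ k, (Fin k → Fin M) → Z := fun k =>
    Nat.rec (motive := fun k => (Fin k → Fin M) → Z) (fun _ => z₀)
      (fun k c w => child k (c (Fin.init w)) (w (Fin.last k))) k
  have hgood (k : ℕ) (w : Fin k → Fin M) : G k (code k w) := by
    induction k with
    | zero => exact hz₀
    | succ k ih => exact ((hchild k _ (ih _)).2 _).2
  have hparent (k : ℕ) (w : Fin (k + 1) → Fin M) : f (code (k + 1) w) = code k (Fin.init w) :=
    ((hchild k _ (hgood k _)).2 _).1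
  refine ⟨code, fun k => ?_, fun _ => rfl, hparent, hgood⟩
  induction k with
  | zero => exact Function.injective_of_subsingleton _
  | succ k ih =>
    intro w w' h
    have hinit : Fin.init w = Fin.init w' := ih (by rw [← hparent, ← hparent, h])
    have hlast : w (Fin.last k) = w' (Fin.last k) := by
      refine (hchild k _ (hgood k (Fin.init w))).1 ?_
      calc _ = code (k + 1) w' := h
        _ = _ := by rw [hinit]
    rw [← Fin.snoc_init_self w, ← Fin.snoc_init_self w', hinit, hlast]

end BackwardOrbits

section LatticeCounting

variable {a R : ℝ}

lemma card_le_of_abs_intCast_sub_le (hR : 0 ≤ R) {T : Finset ℤ}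
    (hT : ∀ z ∈ T, |(z : ℝ) - a| ≤ R) : (T.card : ℝ) ≤ 2 * R + 1 := by
  have hsub : T ⊆ Finset.Icc ⌈a - R⌉ ⌊a + R⌋ := fun z hz => by
    have := abs_le.1 (hT z hz)
    rw [Finset.mem_Icc, Int.ceil_le, Int.le_floor]
    constructor <;> linarith
  have hcard : (T.card : ℝ) ≤ ((⌊a + R⌋ + 1 - ⌈a - R⌉).toNat : ℤ) := by
    rw [← Int.card_Icc]
    exact_mod_cast Finset.card_le_card hsub
  refine hcard.trans ?_
  rw [Int.toNat_eq_max]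
  push_cast
  exact max_le (by linarith [Int.floor_le (a + R), Int.le_ceil (a - R)]) (by linarith)

lemma le_card_of_abs_intCast_sub_le {T : Finset ℤ}
    (hT : ∀ z : ℤ, |(z : ℝ) - a| ≤ R → z ∈ T) : 2 * R - 1 ≤ (T.card : ℝ) := by
  have hsub : Finset.Icc ⌈a - R⌉ ⌊a + R⌋ ⊆ T := fun z hz => by
    rw [Finset.mem_Icc, Int.ceil_le, Int.le_floor] at hz
    exact hT z (abs_le.2 (by constructor <;> linarith [hz.1, hz.2]))
  calc 2 * R - 1 ≤ ((⌊a + R⌋ + 1 - ⌈a - R⌉ : ℤ) : ℝ) := by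
        push_cast
        linarith [Int.lt_floor_add_one (a + R), Int.ceil_lt_add_one (a - R)]
    _ ≤ ((⌊a + R⌋ + 1 - ⌈a - R⌉).toNat : ℤ) := by exact_mod_cast Int.self_le_toNat _
    _ ≤ T.card := by
        rw [← Int.card_Icc]
        exact_mod_cast Finset.card_le_card hsub

lemma card_le_prod_of_abs_intCast_sub_le {ι : Type*} [Fintype ι] {a R : ι → ℝ}
    (hR : ∀ j, 0 ≤ R j) {T : Finset (ι → ℤ)} (hT : ∀ z ∈ T, ∀ j, |(z j : ℝ) - a j| ≤ R j) :
    (T.card : ℝ) ≤ ∏ j, (2 * R j + 1) := by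
  classical
  have hsub : T ⊆ Fintype.piFinset fun j => T.image fun z => z j := fun z hz =>
    Fintype.mem_piFinset.2 fun j => Finset.mem_image_of_mem (fun z => z j) hz
  calc (T.card : ℝ) ≤ ∏ j, ((T.image fun z => z j).card : ℝ) := by
        rw [← Nat.cast_prod, ← Fintype.card_piFinset]
        exact_mod_cast Finset.card_le_card hsub
    _ ≤ ∏ j, (2 * R j + 1) := by
        gcongr with j
        exact card_le_of_abs_intCast_sub_le (hR j) (by simpa using fun z hz => hT z hz j)

end LatticeCounting

namespace PotentialGame

section RoundingTree

variable {b : ℝ}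

/-- The parent map of the forest on `ℤ` obtained by rounding the contraction by `b`. -/
noncomputable def coordParent (b : ℝ) (z : ℤ) : ℤ := round (b * z)

lemma abs_mul_pow_sub_iterate_coordParent_le (hb₀ : 0 ≤ b) (hb₁ : b < 1) (l : ℕ) (v : ℤ) :
    |v * b ^ l - (coordParent b)^[l] v| ≤ (1 - b ^ l) / (2 * (1 - b)) := by
  induction l with
  | zero => simp
  | succ l ih =>
    rw [Function.iterate_succ_apply']
    set w := (coordParent b)^[l] v
    calc |v * b ^ (l + 1) - coordParent b w|
        = |b * (v * b ^ l - w) + (b * w - round (b * w))| := by rw [coordParent]; congr 1; ring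
      _ ≤ b * |v * b ^ l - w| + |b * w - round (b * w)| := by
          rw [← abs_of_nonneg hb₀, ← abs_mul, abs_of_nonneg hb₀]; exact abs_add_le _ _
      _ ≤ b * ((1 - b ^ l) / (2 * (1 - b))) + 1 / 2 := by gcongr; exact abs_sub_round _
      _ = (1 - b ^ (l + 1)) / (2 * (1 - b)) := by
          have : 1 - b ≠ 0 := by linarith
          field_simp
          ring

lemma abs_mul_pow_sub_iterate_coordParent_le_one_sub (hb₀ : 0 ≤ b) (hb : b ≤ 1 / 2) (l : ℕ)
    (v : ℤ) : |v * b ^ l - (coordParent b)^[l] v| ≤ 1 - b ^ l :=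
  (abs_mul_pow_sub_iterate_coordParent_le hb₀ (by linarith) l v).trans
    (div_le_self (by linarith [pow_le_one₀ (n := l) hb₀ (by linarith)]) (by linarith))

lemma iterate_coordParent_eq (hb₀ : 0 < b) (hb : b ≤ 1 / 4) {l : ℕ} (hl : 0 < l) {v z : ℤ}
    (hv : |v * b ^ l - z| ≤ 1 / 3) : (coordParent b)^[l] v = z := by
  obtain ⟨l, rfl⟩ := Nat.exists_eq_add_one.2 hl
  rw [Function.iterate_succ_apply']
  set w := (coordParent b)^[l] v
  have hw : |v * b ^ l - w| < 2 / 3 := by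
    refine (abs_mul_pow_sub_iterate_coordParent_le hb₀.le (by linarith) l v).trans_lt ?_
    rw [div_lt_iff₀ (by linarith)]
    linarith [pow_pos hb₀ l]
  have hdist : |b * w - z| < 1 / 2 := by
    calc |b * w - z| = |b * (w - v * b ^ l) + (v * b ^ (l + 1) - z)| := by congr 1; ring
      _ ≤ |b * (w - v * b ^ l)| + |v * b ^ (l + 1) - z| := abs_add_le _ _
      _ = b * |v * b ^ l - w| + |v * b ^ (l + 1) - z| := by
          rw [abs_mul, abs_of_pos hb₀, abs_sub_comm (w : ℝ)]
      _ < 1 / 2 := by nlinarith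
  rw [abs_lt] at hdist
  rw [coordParent, round_eq, Int.floor_eq_iff]
  constructor <;> linarith

/-- The nodes `l` generations below `z` in the forest of `coordParent b`, when `0 < b ≤ 1 / 2`. -/
noncomputable def coordDescendants (b : ℝ) (l : ℕ) (z : ℤ) : Finset ℤ :=
  (Finset.Icc ⌈(z - 1) / b ^ l⌉ ⌊(z + 1) / b ^ l⌋).filter fun v => (coordParent b)^[l] v = z

lemma mem_coordDescendants (hb₀ : 0 < b) (hb : b ≤ 1 / 2) {l : ℕ} {z v : ℤ} :
    v ∈ coordDescendants b l z ↔ (coordParent b)^[l] v = z := by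
  refine ⟨fun h => (Finset.mem_filter.1 h).2, fun h => Finset.mem_filter.2 ⟨?_, h⟩⟩
  have hl : 0 < b ^ l := pow_pos hb₀ l
  have hv := abs_mul_pow_sub_iterate_coordParent_le_one_sub hb₀.le hb l v
  rw [h, abs_le] at hv
  rw [Finset.mem_Icc, Int.ceil_le, Int.le_floor, div_le_iff₀ hl, le_div_iff₀ hl]
  constructor <;> linarith

lemma abs_sub_div_pow (hb₀ : 0 < b) (l : ℕ) (v z : ℝ) :
    |v - z / b ^ l| = |v * b ^ l - z| / b ^ l := by
  have hl : 0 < b ^ l := pow_pos hb₀ l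
  rw [← abs_of_pos hl, ← abs_div, abs_of_pos hl, sub_div, mul_div_cancel_right₀ _ hl.ne']

lemma card_coordDescendants_le (hb₀ : 0 < b) (hb : b ≤ 1 / 2) (l : ℕ) (z : ℤ) :
    ((coordDescendants b l z).card : ℝ) ≤ 2 * (b ^ l)⁻¹ := by
  have hl : 0 < b ^ l := pow_pos hb₀ l
  have hl₁ : b ^ l ≤ 1 := pow_le_one₀ hb₀.le (by linarith)
  have hcard := card_le_of_abs_intCast_sub_le (a := z / b ^ l) (R := (1 - b ^ l) / b ^ l)
    (T := coordDescendants b l z) (by have := sub_nonneg.2 hl₁; positivity) fun v hv => by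
      rw [abs_sub_div_pow hb₀, ← (mem_coordDescendants hb₀ hb).1 hv]
      gcongr
      exact abs_mul_pow_sub_iterate_coordParent_le_one_sub hb₀.le hb l v
  rw [sub_div, div_self hl.ne', one_div] at hcard
  linarith

lemma le_card_coordDescendants (hb₀ : 0 < b) (hb : b ≤ 1 / 4) {l : ℕ} (hl : 0 < l) (z : ℤ) :
    3⁻¹ * (1 - 5 * b ^ l) * (b ^ l)⁻¹ ≤ ((coordDescendants b l z).card : ℝ) := by
  have hpow : 0 < b ^ l := pow_pos hb₀ l
  have hcard := le_card_of_abs_intCast_sub_le (a := z / b ^ l) (R := 1 / 3 / b ^ l)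
    (T := coordDescendants b l z) fun v hv => by
      rw [abs_sub_div_pow hb₀, div_le_div_iff_of_pos_right hpow] at hv
      exact (mem_coordDescendants hb₀ (by linarith)).2 (iterate_coordParent_eq hb₀ hb hl hv)
  calc 3⁻¹ * (1 - 5 * b ^ l) * (b ^ l)⁻¹ = 1 / 3 / b ^ l - 5 / 3 := by field_simp
    _ ≤ 2 * (1 / 3 / b ^ l) - 1 := by linarith [show 0 < 1 / 3 / b ^ l by positivity]
    _ ≤ _ := hcard

variable {n : ℕ} {β : Fin n → ℝ}

/-- The parent map of the forest on `ℤⁿ` which organises the lattice cells of all levels: the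
coordinatewise rounding of `z ↦ A z`, where `A` is the diagonal matrix with entries `β j`. -/
noncomputable def latticeParent (β : Fin n → ℝ) (z : Fin n → ℤ) : Fin n → ℤ :=
  fun j => coordParent (β j) (z j)

lemma iterate_latticeParent_apply (l : ℕ) (z : Fin n → ℤ) (j : Fin n) :
    (latticeParent β)^[l] z j = (coordParent (β j))^[l] (z j) := by
  induction l generalizing z with
  | zero => rfl
  | succ l ih => rw [Function.iterate_succ_apply, ih, Function.iterate_succ_apply, latticeParent]

/-- The nodes `l` generations below `z` in the forest of `latticeParent β`, when
`0 < β j ≤ 1 / 2` for all `j`. -/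
noncomputable def descendants (β : Fin n → ℝ) (l : ℕ) (z : Fin n → ℤ) : Finset (Fin n → ℤ) :=
  Fintype.piFinset fun j => coordDescendants (β j) l (z j)

variable (hβ : ∀ j, β j ∈ Set.Ioo (0 : ℝ) (1 / 5))

include hβ

lemma mem_descendants {l : ℕ} {z v : Fin n → ℤ} :
    v ∈ descendants β l z ↔ (latticeParent β)^[l] v = z := by
  have hmem (j : Fin n) : v j ∈ coordDescendants (β j) l (z j)
      ↔ (coordParent (β j))^[l] (v j) = z j :=
    mem_coordDescendants (hβ j).1 (by linarith [(hβ j).2])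
  simp only [descendants, Fintype.mem_piFinset, hmem, funext_iff, iterate_latticeParent_apply]

lemma card_descendants_le (l : ℕ) (z : Fin n → ℤ) :
    ((descendants β l z).card : ℝ) ≤ 2 ^ n * ((∏ j, β j) ^ l)⁻¹ := by
  calc ((descendants β l z).card : ℝ)
      = ∏ j, ((coordDescendants (β j) l (z j)).card : ℝ) := by
        rw [descendants, Fintype.card_piFinset, Nat.cast_prod]
    _ ≤ ∏ j, 2 * (β j ^ l)⁻¹ := by
        gcongr with j
        exact card_coordDescendants_le (hβ j).1 (by linarith [(hβ j).2]) l (z j)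
    _ = 2 ^ n * ((∏ j, β j) ^ l)⁻¹ := by
        simp [Finset.prod_mul_distrib, Finset.prod_inv_distrib, Finset.prod_pow]

lemma le_card_descendants {l : ℕ} (hl : 0 < l) (z : Fin n → ℤ) :
    3⁻¹ ^ n * (∏ j, (1 - 5 * β j ^ l)) * ((∏ j, β j) ^ l)⁻¹ ≤ ((descendants β l z).card : ℝ) := by
  have hnonneg (j : Fin n) : 0 ≤ 1 - 5 * β j ^ l := by
    have := pow_le_of_le_one (hβ j).1.le (by linarith [(hβ j).2]) hl.ne'
    linarith [(hβ j).2]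
  calc 3⁻¹ ^ n * (∏ j, (1 - 5 * β j ^ l)) * ((∏ j, β j) ^ l)⁻¹
      = ∏ j, (3⁻¹ * (1 - 5 * β j ^ l) * (β j ^ l)⁻¹) := by
        simp [Finset.prod_mul_distrib, Finset.prod_inv_distrib, Finset.prod_pow]
    _ ≤ ∏ j, ((coordDescendants (β j) l (z j)).card : ℝ) :=
        Finset.prod_le_prod
          (fun j _ => by have := hnonneg j; have := (hβ j).1; positivity)
          fun j _ => le_card_coordDescendants (hβ j).1 (by linarith [(hβ j).2]) hl (z j)
    _ = (descendants β l z).card := by rw [descendants, Fintype.card_piFinset, Nat.cast_prod]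

end RoundingTree

end PotentialGame

namespace PotentialGame

section Cells

variable {n : ℕ} {β : Fin n → ℝ} {ρ : ℝ} {y : Fin n → ℝ} {m : ℕ} {z : Fin n → ℤ}

/-- The centre of the cell of level `m` with lattice index `z`: the point `y + A^(m+1) (ρ z)`. -/
noncomputable def cellCenter (β : Fin n → ℝ) (ρ : ℝ) (y : Fin n → ℝ) (m : ℕ) (z : Fin n → ℤ) :
    Fin n → ℝ :=
  fun j => y j + z j * (β j ^ (m + 1) * ρ)

/-- The boxes which Player I is allowed to play on turn `m + 1` in the simulated plays. Cells of
one level overlap; this makes room for nesting `cell β ρ y (m + 1) z` in the cell of the parent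
of `z`. -/
def cell (β : Fin n → ℝ) (ρ : ℝ) (y : Fin n → ℝ) (m : ℕ) (z : Fin n → ℤ) : Set (Fin n → ℝ) :=
  gameBox β (m + 1) ρ (cellCenter β ρ y m z)

lemma gameBox_eq_Icc (t r : ℝ) (y : Fin n → ℝ) :
    gameBox β t r y = Set.Icc (fun j => y j - β j ^ t * r) (fun j => y j + β j ^ t * r) := by
  ext x
  simp only [gameBox, Set.mem_ofPred_eq, Set.mem_Icc, Pi.le_def, abs_le, ← forall_and]
  refine forall_congr' fun j => ?_
  constructor <;> rintro ⟨h₁, h₂⟩ <;> constructor <;> linarith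

lemma mem_cell {x : Fin n → ℝ} :
    x ∈ cell β ρ y m z ↔ ∀ j, |x j - cellCenter β ρ y m z j| ≤ β j ^ (m + 1) * ρ := by
  refine forall_congr' fun j => ?_
  rw [← Real.rpow_natCast, Nat.cast_succ]

section Nesting

variable (hβ : ∀ j, β j ∈ Set.Ioo (0 : ℝ) (1 / 5)) (hρ : 0 ≤ ρ)

include hβ hρ

lemma cell_succ_subset : cell β ρ y (m + 1) z ⊆ cell β ρ y m (latticeParent β z) := by
  intro x hx
  rw [mem_cell] at hx ⊢
  intro j
  obtain ⟨hβ₀, hβ₁⟩ := hβ j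
  have hround := abs_sub_round (β j * z j)
  have hxj := hx j
  simp only [cellCenter, latticeParent, coordParent] at hxj ⊢
  rw [pow_succ (β j) (m + 1)] at hxj
  have hw : 0 ≤ β j ^ (m + 1) * ρ := by positivity
  set w := β j ^ (m + 1) * ρ with hw_def
  have hscale : β j ^ (m + 1) * β j * ρ = β j * w := by rw [hw_def]; ring
  rw [hscale] at hxj
  calc |x j - (y j + round (β j * z j) * w)|
      = |x j - (y j + z j * (β j * w)) + (β j * z j - round (β j * z j)) * w| := by
        congr 1; ring
    _ ≤ |x j - (y j + z j * (β j * w))| + |β j * z j - round (β j * z j)| * w := by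
        rw [← abs_of_nonneg hw, ← abs_mul, abs_of_nonneg hw]; exact abs_add_le _ _
    _ ≤ β j * w + 1 / 2 * w := by gcongr
    _ ≤ w := by nlinarith

lemma cell_add_subset (l : ℕ) :
    cell β ρ y (m + l) z ⊆ cell β ρ y m ((latticeParent β)^[l] z) := by
  induction l generalizing z with
  | zero => exact subset_rfl
  | succ l ih =>
    rw [Function.iterate_succ_apply]
    exact (cell_succ_subset hβ hρ (m := m + l)).trans ih

lemma exists_mem_cells {v : ℕ → Fin n → ℤ} (hv : ∀ m, latticeParent β (v (m + 1)) = v m) :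
    ∃ x, ∀ m, x ∈ cell β ρ y m (v m) := by
  have hnonempty (m : ℕ) : (cell β ρ y m (v m)).Nonempty :=
    ⟨cellCenter β ρ y m (v m), mem_cell.2 fun j => by
      have := (hβ j).1; rw [sub_self, abs_zero]; positivity⟩
  have hcompact (m : ℕ) : IsCompact (cell β ρ y m (v m)) := by
    rw [cell, gameBox_eq_Icc]; exact isCompact_Icc
  have hanti (m : ℕ) : cell β ρ y (m + 1) (v (m + 1)) ⊆ cell β ρ y m (v m) :=
    hv m ▸ cell_succ_subset hβ hρ
  obtain ⟨x, hx⟩ := IsCompact.nonempty_iInter_of_sequence_nonempty_isCompact_isClosed _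
    hanti hnonempty (hcompact 0) fun m => (hcompact m).isClosed
  exact ⟨x, Set.mem_iInter.1 hx⟩

end Nesting

section Counting

variable (hβ : ∀ j, β j ∈ Set.Ioo (0 : ℝ) (1 / 5)) (hρ : 0 < ρ)

include hβ hρ

lemma card_cells_meeting_box_le {x r : Fin n → ℝ} (hr : ∀ j, 0 ≤ r j) {T : Finset (Fin n → ℤ)}
    (hT : ∀ z ∈ T, ∃ u ∈ cell β ρ y m z, ∀ j, |u j - x j| ≤ r j) :
    (T.card : ℝ) ≤ ∏ j, (2 * (r j / (β j ^ (m + 1) * ρ)) + 3) := by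
  have hw (j : Fin n) : 0 < β j ^ (m + 1) * ρ := by have := (hβ j).1; positivity
  calc (T.card : ℝ) ≤ ∏ j, (2 * (r j / (β j ^ (m + 1) * ρ) + 1) + 1) := by
        refine card_le_prod_of_abs_intCast_sub_le
          (a := fun j => (x j - y j) / (β j ^ (m + 1) * ρ))
          (fun j => add_nonneg (div_nonneg (hr j) (hw j).le) zero_le_one) fun z hz j => ?_
        obtain ⟨u, hu, hux⟩ := hT z hz
        have hu := mem_cell.1 hu j
        have hux := hux j
        have hwj := hw j
        simp only [cellCenter] at hu
        rw [← div_self hwj.ne', ← add_div, ← mul_div_cancel_right₀ (z j : ℝ) hwj.ne', ← sub_div,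
          abs_div, abs_of_pos hwj, div_le_div_iff_of_pos_right hwj]
        rw [abs_le] at hu hux ⊢
        constructor <;> linarith
    _ = ∏ j, (2 * (r j / (β j ^ (m + 1) * ρ)) + 3) := by congr 1; ext j; ring

lemma card_cells_meeting_gameBox_le (q : ℝ) (x : Fin n → ℝ) {T : Finset (Fin n → ℤ)}
    (hT : ∀ z ∈ T, (gameBox β q ρ x ∩ cell β ρ y m z).Nonempty) :
    (T.card : ℝ) ≤ 5 ^ n * max 1 ((∏ j, β j) ^ (q - (m + 1))) := by
  set t : ℝ := q - (m + 1) with ht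
  have hratio (j : Fin n) : β j ^ q * ρ / (β j ^ (m + 1) * ρ) = β j ^ t := by
    rw [mul_div_mul_right _ _ hρ.ne', ht, Real.rpow_sub (hβ j).1, ← Nat.cast_succ,
      Real.rpow_natCast]
  calc (T.card : ℝ) ≤ ∏ j, (2 * (β j ^ q * ρ / (β j ^ (m + 1) * ρ)) + 3) := by
        refine card_cells_meeting_box_le hβ hρ (x := x) (y := y)
          (fun j => by have := (hβ j).1; positivity) fun z hz => ?_
        obtain ⟨u, hux, hu⟩ := hT z hz
        exact ⟨u, hu, hux⟩
    _ = ∏ j, (2 * β j ^ t + 3) := by simp only [hratio]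
    _ ≤ 5 ^ n * max 1 ((∏ j, β j) ^ t) := ?_
  rcases le_total 0 t with h | h
  · calc ∏ j, (2 * β j ^ t + 3) ≤ ∏ _j : Fin n, (5 : ℝ) :=
          Finset.prod_le_prod (fun j _ => by have := (hβ j).1; positivity) fun j _ => by
            linarith [Real.rpow_le_one (hβ j).1.le (by linarith [(hβ j).2]) h]
      _ = 5 ^ n * 1 := by simp
      _ ≤ _ := by gcongr; exact le_max_left _ _
  · calc ∏ j, (2 * β j ^ t + 3) ≤ ∏ j, 5 * β j ^ t :=
          Finset.prod_le_prod (fun j _ => by have := (hβ j).1; positivity) fun j _ => by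
            linarith [Real.one_le_rpow_of_pos_of_le_one_of_nonpos (hβ j).1
              (by linarith [(hβ j).2]) h]
      _ = 5 ^ n * (∏ j, β j) ^ t := by
          rw [Finset.prod_mul_distrib, Real.finsetProd_rpow _ _ fun j _ => (hβ j).1.le]; simp
      _ ≤ _ := by gcongr; exact le_max_right _ _

end Counting

end Cells

end PotentialGame

section Numerics

variable {x : ℝ}

lemma pow_mul_natCast_mul_one_sub_le_one (hx₀ : 0 ≤ x) (hx₁ : x ≤ 1) (N : ℕ) :
    x ^ N * (N * (1 - x)) ≤ 1 := by
  have hsum : N * x ^ N ≤ ∑ i ∈ Finset.range N, x ^ i := by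
    simpa using Finset.card_nsmul_le_sum (Finset.range N) (x ^ ·) (x ^ N) fun i hi =>
      pow_le_pow_of_le_one hx₀ hx₁ (Finset.mem_range.1 hi).le
  calc x ^ N * (N * (1 - x)) = N * x ^ N * (1 - x) := by ring
    _ ≤ (∑ i ∈ Finset.range N, x ^ i) * (1 - x) := by gcongr
    _ ≤ 1 := by rw [geom_sum_mul_neg]; linarith [pow_nonneg hx₀ N]

lemma sum_pow_sub_mul_one_sub_le_one (hx₀ : 0 ≤ x) (hx₁ : x ≤ 1) (N : ℕ) :
    (∑ l ∈ Finset.range N, x ^ (N - l)) * (1 - x) ≤ 1 := by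
  have hreflect : ∑ l ∈ Finset.range N, x ^ (N - l) = x * ∑ i ∈ Finset.range N, x ^ i := by
    rw [← Finset.sum_range_reflect, Finset.mul_sum]
    refine Finset.sum_congr rfl fun l hl => ?_
    have := Finset.mem_range.1 hl
    rw [← pow_succ']
    congr 1
    omega
  rw [hreflect, mul_assoc, geom_sum_mul_neg]
  exact mul_le_one₀ hx₁ (sub_nonneg.2 (pow_le_one₀ hx₀ hx₁)) (by linarith [pow_nonneg hx₀ N])

lemma sum_add_mul_pow_sub_div_le {a b δ : ℝ} (hx₀ : 0 ≤ x) (hx₁ : x ≤ 1) (hδ : 0 < δ)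
    (hb : b ≤ δ ^ 2 * (1 - x)) {N : ℕ} (hNa : N * a ≤ δ) :
    ∑ l ∈ Finset.range N, (a + b * x ^ (N - l) / δ) ≤ 2 * δ := by
  have hgeom := sum_pow_sub_mul_one_sub_le_one hx₀ hx₁ N
  calc ∑ l ∈ Finset.range N, (a + b * x ^ (N - l) / δ)
      = N * a + b * (∑ l ∈ Finset.range N, x ^ (N - l)) / δ := by
        rw [Finset.sum_add_distrib, Finset.mul_sum, Finset.sum_div]; simp
    _ ≤ δ + δ ^ 2 * (1 - x) * (∑ l ∈ Finset.range N, x ^ (N - l)) / δ := by gcongr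
    _ = δ + δ * ((∑ l ∈ Finset.range N, x ^ (N - l)) * (1 - x)) := by field_simp
    _ ≤ 2 * δ := by nlinarith

lemma one_le_tsum_min_one {ι : Type*} {f : ι → ℝ≥0∞} (hf : 1 ≤ ∑' i, f i) :
    1 ≤ ∑' i, min 1 (f i) := by
  by_cases h : ∃ i, 1 ≤ f i
  · obtain ⟨i, hi⟩ := h
    calc (1 : ℝ≥0∞) = min 1 (f i) := (min_eq_left hi).symm
      _ ≤ ∑' i, min 1 (f i) := ENNReal.le_tsum i
  · push Not at h
    simpa only [min_eq_right (h _).le] using hf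

end Numerics

namespace PotentialGame

section Potential

variable {n : ℕ} {β : Fin n → ℝ} {α c δ ρ s : ℝ} {y : Fin n → ℝ} {k m : ℕ}
  {p : ℝ × (Fin n → ℝ)} {Q Q' : Set (ℝ × (Fin n → ℝ))}

/-- The volume of the box deleted by `p = (q, y)`, relative to the volume of the cells of
level `m`. -/
noncomputable def relVol (β : Fin n → ℝ) (m : ℕ) (p : ℝ × (Fin n → ℝ)) : ℝ :=
  (∏ j, β j) ^ (p.1 - (m + 1))

/-- The total `c`-weight of a collection of deletions on the scale of the cells of level `m`. In
these units Player II may spend at most `α ^ c` on turn `m + 1`. -/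
noncomputable def relWeight (β : Fin n → ℝ) (c : ℝ) (m : ℕ) (Q : Set (ℝ × (Fin n → ℝ))) : ℝ≥0∞ :=
  ∑' p : Q, ENNReal.ofReal (relVol β m p ^ c)

/-- The weight of a collection of deletions in units of the threshold `δ`, a single deletion being
counted at most once. The truncation keeps the first moment of deletions much larger than a cell
under control. -/
noncomputable def load (β : Fin n → ℝ) (c δ : ℝ) (m : ℕ) (Q : Set (ℝ × (Fin n → ℝ))) : ℝ≥0∞ :=
  ∑' p : Q, min 1 (ENNReal.ofReal (relVol β m p ^ c / δ))

/-- The deletions which meet the cell of level `m` with index `z`. -/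
def deletionsMeeting (β : Fin n → ℝ) (ρ : ℝ) (y : Fin n → ℝ) (m : ℕ) (z : Fin n → ℤ) :
    Set (ℝ × (Fin n → ℝ)) :=
  {p | (gameBox β p.1 ρ p.2 ∩ cell β ρ y m z).Nonempty}

lemma load_mono (h : Q ⊆ Q') : load β c δ m Q ≤ load β c δ m Q' :=
  ENNReal.tsum_mono_subtype (fun p => min 1 (ENNReal.ofReal (relVol β m p ^ c / δ))) h

lemma load_union_le : load β c δ m (Q ∪ Q') ≤ load β c δ m Q + load β c δ m Q' :=
  ENNReal.tsum_union_le (fun p => min 1 (ENNReal.ofReal (relVol β m p ^ c / δ))) Q Q'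

lemma load_biUnion_le {ι : Type*} {I : Finset ι} {Q : ι → Set (ℝ × (Fin n → ℝ))} :
    load β c δ m (⋃ i ∈ I, Q i) ≤ ∑ i ∈ I, load β c δ m (Q i) :=
  ENNReal.tsum_biUnion_le (fun p => min 1 (ENNReal.ofReal (relVol β m p ^ c / δ))) I Q

lemma one_le_load_of_lt_relWeight (hδ : 0 < δ) (h : ENNReal.ofReal δ < relWeight β c m Q) :
    1 ≤ load β c δ m Q := by
  refine one_le_tsum_min_one ?_
  calc (1 : ℝ≥0∞) ≤ relWeight β c m Q / ENNReal.ofReal δ := by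
        rw [ENNReal.le_div_iff_mul_le (by simp [hδ]) (by simp), one_mul]
        exact h.le
    _ = ∑' p : Q, ENNReal.ofReal (relVol β m p ^ c / δ) := by
        rw [relWeight, div_eq_mul_inv, ← ENNReal.tsum_mul_right]
        simp only [ENNReal.ofReal_div_of_pos hδ, ← div_eq_mul_inv]

section

variable (hβ : ∀ j, β j ∈ Set.Ioo (0 : ℝ) (1 / 5))

include hβ

lemma prod_pos : 0 < ∏ j, β j := Finset.prod_pos fun j _ => (hβ j).1

lemma prod_le_one : ∏ j, β j ≤ 1 :=
  Finset.prod_le_one (fun j _ => (hβ j).1.le) fun j _ => by linarith [(hβ j).2]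

lemma relVol_pos (m : ℕ) (p : ℝ × (Fin n → ℝ)) : 0 < relVol β m p :=
  Real.rpow_pos_of_pos (prod_pos hβ) _

lemma relVol_add (k j : ℕ) (p : ℝ × (Fin n → ℝ)) :
    relVol β (k + j) p = relVol β k p * ((∏ i, β i) ^ j)⁻¹ := by
  rw [relVol, relVol, ← Real.rpow_natCast, ← Real.rpow_neg (prod_pos hβ).le,
    ← Real.rpow_add (prod_pos hβ)]
  congr 1
  push_cast
  ring

lemma relWeight_le_of_legalMove (hα : 0 ≤ α) (hc : 0 < c) (h : LegalMove β α c m Q) :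
    relWeight β c m Q ≤ ENNReal.ofReal (α ^ c) := by
  have hP := prod_pos hβ
  have hsum := h.2.2
  simp only [if_pos hc, Real.finsetProd_rpow _ _ fun j _ => (hβ j).1.le] at hsum
  set u : ℝ := (∏ j, β j) ^ (m + 1 : ℝ)
  have hu₀ : 0 < u := Real.rpow_pos_of_pos hP _
  calc relWeight β c m Q
      = (∑' p : Q, ENNReal.ofReal (((∏ j, β j) ^ p.1.1) ^ c)) * ENNReal.ofReal ((u ^ c)⁻¹) := by
        rw [relWeight, ← ENNReal.tsum_mul_right]
        refine tsum_congr fun p => ?_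
        rw [← ENNReal.ofReal_mul (by positivity), relVol, Real.rpow_sub hP,
          Real.div_rpow (by positivity) hu₀.le, div_eq_mul_inv]
    _ ≤ ENNReal.ofReal ((α * u) ^ c) * ENNReal.ofReal ((u ^ c)⁻¹) := by gcongr
    _ = ENNReal.ofReal (α ^ c) := by
        rw [← ENNReal.ofReal_mul (by positivity), Real.mul_rpow hα hu₀.le,
          mul_inv_cancel_right₀ (by positivity)]

section

variable (hρ : 0 < ρ) (hδ : 0 ≤ δ)

include hρ hδ

lemma card_mul_min_le {T : Finset (Fin n → ℤ)} (hT : ∀ z ∈ T, p ∈ deletionsMeeting β ρ y m z) :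
    T.card * min 1 (relVol β m p ^ c / δ)
      ≤ 5 ^ n * (relVol β m p + relVol β m p ^ c / δ) := by
  have hu := relVol_pos hβ m p
  set u := relVol β m p
  have ht : 0 ≤ u ^ c / δ := by positivity
  calc T.card * min 1 (u ^ c / δ)
      ≤ 5 ^ n * max 1 u * min 1 (u ^ c / δ) := by
        gcongr
        exact card_cells_meeting_gameBox_le hβ hρ p.1 p.2 hT
    _ = 5 ^ n * (max 1 u * min 1 (u ^ c / δ)) := mul_assoc _ _ _
    _ ≤ 5 ^ n * (u + u ^ c / δ) := by
        gcongr
        rcases le_total 1 u with h | h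
        · rw [max_eq_right h]
          exact (mul_le_of_le_one_right hu.le (min_le_left _ _)).trans (by linarith)
        · rw [max_eq_left h, one_mul]
          exact (min_le_right _ _).trans (by linarith)

lemma card_mul_min_le_of_relVol_le (hc : c ≤ 1) (j : ℕ) (hs : relVol β k p ≤ s)
    {T : Finset (Fin n → ℤ)} (hT : ∀ z ∈ T, p ∈ deletionsMeeting β ρ y (k + j) z) :
    T.card * min 1 (relVol β (k + j) p ^ c / δ)
      ≤ relVol β k p ^ c * (5 ^ n * ((∏ i, β i) ^ j)⁻¹
        * (s ^ (1 - c) + ((∏ i, β i) ^ (1 - c)) ^ j / δ)) := by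
  have hP := prod_pos hβ
  have hu := relVol_pos hβ k p
  set P := ∏ i, β i with hP_def
  set u := relVol β k p with hu_def
  have hvol : u = u ^ c * u ^ (1 - c) := by rw [← Real.rpow_add hu]; simp
  have hscale : (P ^ j)⁻¹ ^ c = (P ^ j)⁻¹ * (P ^ (1 - c)) ^ j := by
    rw [Real.rpow_pow_comm hP.le, Real.rpow_sub (by positivity), Real.rpow_one,
      Real.inv_rpow (by positivity)]
    field_simp
  refine (card_mul_min_le hβ hρ hδ hT).trans ?_
  rw [relVol_add hβ, ← hP_def, ← hu_def, Real.mul_rpow hu.le (by positivity), hscale]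
  calc 5 ^ n * (u * (P ^ j)⁻¹ + u ^ c * ((P ^ j)⁻¹ * (P ^ (1 - c)) ^ j) / δ)
      = u ^ c * (5 ^ n * (P ^ j)⁻¹ * (u ^ (1 - c) + (P ^ (1 - c)) ^ j / δ)) := by
        nth_rw 1 [hvol]; ring
    _ ≤ _ := by gcongr

lemma sum_load_le (hc₀ : 0 < c) (hc₁ : c ≤ 1) (hs : 0 < s)
    (hQ : relWeight β c k Q ≤ ENNReal.ofReal (s ^ c)) {j : ℕ} (hm : k + j = m)
    (T : Finset (Fin n → ℤ)) :
    ∑ v ∈ T, load β c δ m (Q ∩ deletionsMeeting β ρ y m v)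
      ≤ ENNReal.ofReal (5 ^ n * ((∏ i, β i) ^ j)⁻¹
        * (s + s ^ c * ((∏ i, β i) ^ (1 - c)) ^ j / δ)) := by
  classical
  subst hm
  have hP := prod_pos hβ
  set B := 5 ^ n * ((∏ i, β i) ^ j)⁻¹ * (s ^ (1 - c) + ((∏ i, β i) ^ (1 - c)) ^ j / δ) with hB_def
  have hB : 0 ≤ B := by positivity
  let g (p : ℝ × (Fin n → ℝ)) : ℝ≥0∞ := min 1 (ENNReal.ofReal (relVol β (k + j) p ^ c / δ))
  have hsmall (p : Q) : relVol β k p ≤ s := by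
    rw [← Real.rpow_le_rpow_iff (relVol_pos hβ k p).le hs.le hc₀,
      ← ENNReal.ofReal_le_ofReal_iff (by positivity)]
    exact (ENNReal.le_tsum (f := fun p : Q => ENNReal.ofReal (relVol β k p ^ c)) p).trans hQ
  have hterm (p : Q) : ∑ v ∈ T, (deletionsMeeting β ρ y (k + j) v).indicator g p
      ≤ ENNReal.ofReal (relVol β k p ^ c) * ENNReal.ofReal B := by
    have hu := (relVol_pos hβ k p).le
    rw [Finset.sum_indicator_eq_sum_filter T (fun _ => g), Finset.sum_const, nsmul_eq_mul,
      ← ENNReal.ofReal_mul (by positivity), ← ENNReal.ofReal_natCast]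
    simp only [g]
    rw [← ENNReal.ofReal_one, ← ENNReal.ofReal_min, ← ENNReal.ofReal_mul (by positivity)]
    exact ENNReal.ofReal_le_ofReal <| card_mul_min_le_of_relVol_le hβ hρ hδ hc₁ j (hsmall p)
      fun v hv => (Finset.mem_filter.1 hv).2
  calc ∑ v ∈ T, load β c δ (k + j) (Q ∩ deletionsMeeting β ρ y (k + j) v)
      = ∑ v ∈ T, ∑' p : Q, (deletionsMeeting β ρ y (k + j) v).indicator g p := by
        refine Finset.sum_congr rfl fun v _ => ?_
        rw [load, tsum_subtype _ g, tsum_subtype _ ((deletionsMeeting β ρ y (k + j) v).indicator g),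
          Set.indicator_indicator]
    _ = ∑' p : Q, ∑ v ∈ T, (deletionsMeeting β ρ y (k + j) v).indicator g p :=
        (Summable.tsum_finsetSum fun _ _ => ENNReal.summable).symm
    _ ≤ ∑' p : Q, ENNReal.ofReal (relVol β k p ^ c) * ENNReal.ofReal B :=
        ENNReal.tsum_le_tsum hterm
    _ ≤ ENNReal.ofReal (s ^ c) * ENNReal.ofReal B := by
        rw [ENNReal.tsum_mul_right]; gcongr; exact hQ
    _ = _ := by
        have hs_split : s ^ c * s ^ (1 - c) = s := by rw [← Real.rpow_add hs]; simp
        rw [← ENNReal.ofReal_mul (by positivity), hB_def, ← mul_assoc, mul_comm (s ^ c), mul_assoc,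
          mul_add, hs_split, mul_div_assoc]

end

end

end Potential

end PotentialGame

namespace PotentialGame

section Survival

variable {n : ℕ} {β : Fin n → ℝ} {α c δ ρ : ℝ} {y : Fin n → ℝ}
  {D : ℕ → (Fin n → ℤ) → Set (ℝ × (Fin n → ℝ))} {m N l : ℕ} {v z : Fin n → ℤ}

/-- The deletions still relevant for the cell of level `m` with index `z`: those which meet this
cell and were chosen in reply to one of its proper ancestors. Here `D i w` stands for Player II's
reply to the cell of level `i` with index `w`. -/
def threats (β : Fin n → ℝ) (ρ : ℝ) (y : Fin n → ℝ)
    (D : ℕ → (Fin n → ℤ) → Set (ℝ × (Fin n → ℝ))) (m : ℕ) (z : Fin n → ℤ) :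
    Set (ℝ × (Fin n → ℝ)) :=
  {p | p ∈ deletionsMeeting β ρ y m z ∧ ∃ i < m, p ∈ D i ((latticeParent β)^[m - i] z)}

/-- A node is good if the relative weight of the deletions threatening its cell is at
most `δ`. -/
def IsGood (β : Fin n → ℝ) (c δ ρ : ℝ) (y : Fin n → ℝ)
    (D : ℕ → (Fin n → ℤ) → Set (ℝ × (Fin n → ℝ))) (m : ℕ) (z : Fin n → ℤ) : Prop :=
  relWeight β c m (threats β ρ y D m z) ≤ ENNReal.ofReal δ

/-- A lower bound for the proportion of good nodes among the descendants of a good node `N`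
generations below, relative to the ratio `(∏ j, β j) ^ (-N)` of the volumes of their cells. -/
noncomputable def survivalRatio (β : Fin n → ℝ) (δ : ℝ) (N : ℕ) : ℝ :=
  3⁻¹ ^ n * ∏ j, (1 - 5 * β j ^ N) - 8 ^ n * (1 + 2 ^ (2 * n + 1)) * δ

lemma isGood_zero : IsGood β c δ ρ y D 0 z := by
  have : threats β ρ y D 0 z = ∅ := by simp [threats]
  simp [IsGood, relWeight, this]

variable (hβ : ∀ j, β j ∈ Set.Ioo (0 : ℝ) (1 / 5)) (hρ : 0 < ρ)

include hβ hρ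

lemma threats_add_subset (hv : (latticeParent β)^[N] v = z) :
    threats β ρ y D (m + N) v ⊆ (threats β ρ y D m z ∩ deletionsMeeting β ρ y (m + N) v) ∪
      ⋃ l ∈ Finset.range N,
        D (m + l) ((latticeParent β)^[N - l] v) ∩ deletionsMeeting β ρ y (m + N) v := by
  rintro p ⟨hp, i, hi, hpi⟩
  rcases lt_or_ge i m with him | him
  · refine Or.inl ⟨⟨?_, i, him, ?_⟩, hp⟩
    · exact hp.mono (Set.inter_subset_inter_right _ (hv ▸ cell_add_subset hβ hρ.le N))
    · rwa [← hv, ← Function.iterate_add_apply, ← Nat.sub_add_comm him.le]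
  · obtain ⟨l, rfl⟩ := Nat.exists_eq_add_of_le him
    rw [Nat.add_sub_add_left] at hpi
    exact Or.inr (Set.mem_biUnion (Finset.mem_range.2 (Nat.add_lt_add_iff_left.1 hi)) ⟨hpi, hp⟩)

lemma load_threats_add_le (hv : (latticeParent β)^[N] v = z) :
    load β c δ (m + N) (threats β ρ y D (m + N) v)
      ≤ load β c δ (m + N) (threats β ρ y D m z ∩ deletionsMeeting β ρ y (m + N) v)
        + ∑ l ∈ Finset.range N, load β c δ (m + N)
          (D (m + l) ((latticeParent β)^[N - l] v) ∩ deletionsMeeting β ρ y (m + N) v) := by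
  refine (load_mono (threats_add_subset hβ hρ hv)).trans (load_union_le.trans ?_)
  gcongr
  exact load_biUnion_le

lemma sum_load_reply_le (hc₀ : 0 < c) (hc₁ : c ≤ 1) (hα : 0 < α) (hδ : 0 ≤ δ)
    (hD : ∀ m z, relWeight β c m (D m z) ≤ ENNReal.ofReal (α ^ c)) (hl : l ≤ N) :
    ∑ v ∈ descendants β N z, load β c δ (m + N)
        (D (m + l) ((latticeParent β)^[N - l] v) ∩ deletionsMeeting β ρ y (m + N) v)
      ≤ ENNReal.ofReal (10 ^ n * ((∏ j, β j) ^ N)⁻¹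
        * (α + α ^ c * ((∏ j, β j) ^ (1 - c)) ^ (N - l) / δ)) := by
  classical
  have hP := prod_pos hβ
  set b := 5 ^ n * ((∏ j, β j) ^ (N - l))⁻¹
    * (α + α ^ c * ((∏ j, β j) ^ (1 - c)) ^ (N - l) / δ) with hb_def
  have hb : 0 ≤ b := by positivity
  have hmaps (v : Fin n → ℤ) (hv : v ∈ descendants β N z) :
      (latticeParent β)^[N - l] v ∈ descendants β l z := by
    rwa [mem_descendants hβ, ← Function.iterate_add_apply, Nat.add_sub_cancel' hl,
      ← mem_descendants hβ]
  rw [← Finset.sum_fiberwise_of_maps_to hmaps]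
  calc _ ≤ ∑ _ ∈ descendants β l z, ENNReal.ofReal b := by
        refine Finset.sum_le_sum fun w _ => ?_
        have hlevel : m + l + (N - l) = m + N := by omega
        refine le_trans (le_of_eq (Finset.sum_congr rfl fun v hv => ?_))
          (sum_load_le hβ hρ hδ hc₀ hc₁ hα (hD (m + l) w) (y := y) hlevel
            ((descendants β N z).filter fun v => (latticeParent β)^[N - l] v = w))
        rw [(Finset.mem_filter.1 hv).2]
    _ = ENNReal.ofReal ((descendants β l z).card * b) := by
        rw [Finset.sum_const, nsmul_eq_mul, ← ENNReal.ofReal_natCast,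
          ← ENNReal.ofReal_mul (by positivity)]
    _ ≤ ENNReal.ofReal (2 ^ n * ((∏ j, β j) ^ l)⁻¹ * b) := by
        gcongr
        exact card_descendants_le hβ l z
    _ = _ := by
        congr 1
        rw [hb_def, ← Nat.sub_add_cancel hl, pow_add (∏ j, β j) (N - l), Nat.add_sub_cancel,
          mul_inv, show (10 : ℝ) = 5 * 2 by norm_num, mul_pow]
        ring

end Survival

section SurvivalCount

variable {n : ℕ} {β : Fin n → ℝ} {α c δ ρ : ℝ} {y : Fin n → ℝ}
  {D : ℕ → (Fin n → ℤ) → Set (ℝ × (Fin n → ℝ))} {m N : ℕ} {z : Fin n → ℤ}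

lemma five_pow_mul_add_le (hn : 0 < n) :
    (5 : ℝ) ^ n * 3 + 10 ^ n * 2 ≤ 8 ^ n * (1 + 2 ^ (2 * n + 1)) := by
  have htwo : (2 : ℝ) ≤ 2 ^ n := by simpa using pow_le_pow_right₀ (one_le_two (α := ℝ)) hn
  calc (5 : ℝ) ^ n * 3 + 10 ^ n * 2 = 5 ^ n * (3 + 2 ^ n * 2) := by
        rw [show (10 : ℝ) = 5 * 2 by norm_num, mul_pow]; ring
    _ ≤ 8 ^ n * (1 + 2 ^ (2 * n + 1)) := by
        have hquad : (3 : ℝ) + 2 ^ n * 2 ≤ 1 + 2 ^ (2 * n + 1) := by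
          rw [pow_succ, pow_mul']; nlinarith
        exact mul_le_mul (by gcongr; norm_num) hquad (by positivity) (by positivity)

variable (hn : 0 < n) (hβ : ∀ j, β j ∈ Set.Ioo (0 : ℝ) (1 / 5)) (hρ : 0 < ρ)
  (hα : 0 < α) (hc : c ∈ Set.Ioo (0 : ℝ) 1) (hδ : δ ∈ Set.Ioo (0 : ℝ) 1)
  (hbudget : α ^ c ≤ δ ^ 2 * (1 - (∏ j, β j) ^ (1 - c)))
  (hNα : N * α ≤ δ) (hN : ((∏ j, β j) ^ (1 - c)) ^ N ≤ 2 * δ)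
  (hD : ∀ m z, relWeight β c m (D m z) ≤ ENNReal.ofReal (α ^ c))
  (hz : IsGood β c δ ρ y D m z)

include hβ hρ hα hc hδ hbudget hNα hN hD hz

lemma sum_load_threats_le :
    ∑ v ∈ descendants β N z, load β c δ (m + N) (threats β ρ y D (m + N) v)
      ≤ ENNReal.ofReal ((5 ^ n * 3 + 10 ^ n * 2) * δ * ((∏ j, β j) ^ N)⁻¹) := by
  obtain ⟨hc₀, hc₁⟩ := hc
  obtain ⟨hδ₀, hδ₁⟩ := hδ
  have hP := prod_pos hβ
  set P := ∏ j, β j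
  set x := P ^ (1 - c)
  have hx₀ : 0 ≤ x := by positivity
  have hx₁ : x ≤ 1 := Real.rpow_le_one hP.le (prod_le_one hβ) (by linarith)
  have hold : ∑ v ∈ descendants β N z, load β c δ (m + N)
        (threats β ρ y D m z ∩ deletionsMeeting β ρ y (m + N) v)
      ≤ ENNReal.ofReal (5 ^ n * (P ^ N)⁻¹ * (3 * δ)) := by
    have hroot : (δ ^ c⁻¹) ^ c = δ := Real.rpow_inv_rpow hδ₀.le hc₀.ne'
    refine (sum_load_le hβ hρ hδ₀.le hc₀ hc₁.le (Real.rpow_pos_of_pos hδ₀ c⁻¹)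
      (hroot.symm ▸ hz) rfl _).trans (ENNReal.ofReal_le_ofReal ?_)
    have hroot_le : δ ^ c⁻¹ ≤ δ := by
      simpa using Real.rpow_le_rpow_of_exponent_ge hδ₀ hδ₁.le ((one_le_inv₀ hc₀).2 hc₁.le)
    rw [hroot, mul_div_cancel_left₀ _ hδ₀.ne']
    gcongr
    linarith
  have hnew : ∑ l ∈ Finset.range N, (α + α ^ c * x ^ (N - l) / δ) ≤ 2 * δ :=
    sum_add_mul_pow_sub_div_le hx₀ hx₁ hδ₀ hbudget hNα
  calc _ ≤ ∑ v ∈ descendants β N z, (_ + _) :=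
        Finset.sum_le_sum fun v hv => load_threats_add_le hβ hρ ((mem_descendants hβ).1 hv)
    _ ≤ ENNReal.ofReal (5 ^ n * (P ^ N)⁻¹ * (3 * δ)) + ∑ l ∈ Finset.range N,
          ENNReal.ofReal (10 ^ n * (P ^ N)⁻¹ * (α + α ^ c * x ^ (N - l) / δ)) := by
        rw [Finset.sum_add_distrib, Finset.sum_comm]
        gcongr with l hl
        exact sum_load_reply_le hβ hρ hc₀ hc₁.le hα hδ₀.le hD (Finset.mem_range.1 hl).le
    _ = ENNReal.ofReal (5 ^ n * (P ^ N)⁻¹ * (3 * δ) + 10 ^ n * (P ^ N)⁻¹ *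
          ∑ l ∈ Finset.range N, (α + α ^ c * x ^ (N - l) / δ)) := by
        rw [← ENNReal.ofReal_sum_of_nonneg fun l _ => by positivity, ← Finset.mul_sum,
          ← ENNReal.ofReal_add (by positivity) (by positivity)]
    _ ≤ ENNReal.ofReal (5 ^ n * (P ^ N)⁻¹ * (3 * δ) + 10 ^ n * (P ^ N)⁻¹ * (2 * δ)) := by gcongr
    _ = _ := by congr 1; ring

open Classical in
lemma card_not_isGood_le :
    (((descendants β N z).filter fun v => ¬ IsGood β c δ ρ y D (m + N) v).card : ℝ)
      ≤ (5 ^ n * 3 + 10 ^ n * 2) * δ * ((∏ j, β j) ^ N)⁻¹ := by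
  have hP := prod_pos hβ
  have hδ₀ := hδ.1
  rw [← ENNReal.ofReal_le_ofReal_iff (by positivity), ENNReal.ofReal_natCast]
  refine le_trans ?_ (sum_load_threats_le hβ hρ hα hc hδ hbudget hNα hN hD hz)
  calc _ ≤ ∑ v ∈ descendants β N z with ¬ IsGood β c δ ρ y D (m + N) v,
          load β c δ (m + N) (threats β ρ y D (m + N) v) := by
        rw [← nsmul_one]
        exact Finset.card_nsmul_le_sum _ _ _ fun v hv =>
          one_le_load_of_lt_relWeight hδ₀ (not_le.1 (Finset.mem_filter.1 hv).2)
    _ ≤ _ := Finset.sum_le_sum_of_subset (Finset.filter_subset _ _)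

include hn in
open Classical in
lemma survivalRatio_mul_le_card_isGood (hN₀ : 0 < N) :
    survivalRatio β δ N * ((∏ j, β j) ^ N)⁻¹
      ≤ ((descendants β N z).filter fun v => IsGood β c δ ρ y D (m + N) v).card := by
  have hP := prod_pos hβ
  have hδ₀ := hδ.1
  have htotal := le_card_descendants hβ hN₀ z
  have hbad := card_not_isGood_le hβ hρ hα hc hδ hbudget hNα hN hD hz
  have hconst : (5 ^ n * 3 + 10 ^ n * 2) * δ * ((∏ j, β j) ^ N)⁻¹
      ≤ 8 ^ n * (1 + 2 ^ (2 * n + 1)) * δ * ((∏ j, β j) ^ N)⁻¹ := by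
    gcongr
    exact five_pow_mul_add_le hn
  have hsplit := Finset.card_filter_add_card_filter_not (s := descendants β N z)
    (IsGood β c δ ρ y D (m + N))
  rw [← hsplit, Nat.cast_add] at htotal
  rw [survivalRatio, sub_mul]
  linarith

end SurvivalCount

end PotentialGame

namespace PotentialGame

section Coding

variable {n : ℕ} {β : Fin n → ℝ} {α c δ ρ : ℝ} {y : Fin n → ℝ}
  {D : ℕ → (Fin n → ℤ) → Set (ℝ × (Fin n → ℝ))} {S : Set (Fin n → ℝ)}

lemma gameBox_add_two_cellCenter (m : ℕ) (z : Fin n → ℤ) :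
    gameBox β (m + 2) ρ (cellCenter β ρ y (m + 1) z) = cell β ρ y (m + 1) z := by
  rw [cell, Nat.cast_succ, add_assoc, one_add_one_eq_two]

lemma cell_zero_zero : cell β ρ y 0 0 = gameBox β 1 ρ y := by
  have hcenter : cellCenter β ρ y 0 0 = y := by ext j; simp [cellCenter]
  rw [cell, hcenter, Nat.cast_zero, zero_add]

variable (hβ : ∀ j, β j ∈ Set.Ioo (0 : ℝ) (1 / 5))

include hβ

lemma prod_lt_one (hn : 0 < n) : ∏ j, β j < 1 := by
  calc ∏ j, β j ≤ ∏ _j : Fin n, (1 / 5 : ℝ) :=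
        Finset.prod_le_prod (fun j _ => (hβ j).1.le) fun j _ => (hβ j).2.le
    _ < 1 := by
        rw [Finset.prod_const, Finset.card_univ, Fintype.card_fin]
        exact pow_lt_one₀ (by norm_num) (by norm_num) hn.ne'

lemma tendsto_relVol_atTop (hn : 0 < n) (p : ℝ × (Fin n → ℝ)) :
    Filter.Tendsto (fun m => relVol β m p) Filter.atTop Filter.atTop := by
  have hP := prod_pos hβ
  have hscale (m : ℕ) : relVol β m p = relVol β 0 p * (∏ j, β j)⁻¹ ^ m := by
    rw [← zero_add m, relVol_add hβ, zero_add, inv_pow]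
  rw [funext hscale]
  exact (tendsto_pow_atTop_atTop_of_one_lt ((one_lt_inv₀ hP).2 (prod_lt_one hβ hn))).const_mul_atTop
    (relVol_pos hβ 0 p)

lemma notMem_gameBox_of_frequently_isGood (hn : 0 < n) (hc : 0 < c) (hδ : 0 ≤ δ)
    {v : ℕ → Fin n → ℤ} (hv : ∀ m, latticeParent β (v (m + 1)) = v m) {x : Fin n → ℝ}
    (hx : ∀ m, x ∈ cell β ρ y m (v m))
    (hgood : ∃ᶠ m in Filter.atTop, IsGood β c δ ρ y D m (v m)) {i : ℕ} {p : ℝ × (Fin n → ℝ)}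
    (hp : p ∈ D i (v i)) : x ∉ gameBox β p.1 ρ p.2 := by
  intro hxp
  have hlarge : ∀ᶠ m in Filter.atTop, δ < relVol β m p ^ c :=
    ((tendsto_rpow_atTop hc).comp (tendsto_relVol_atTop hβ hn p)).eventually_gt_atTop δ
  obtain ⟨m, hm, hδm, him⟩ :=
    (hgood.and_eventually (hlarge.and (Filter.eventually_gt_atTop i))).exists
  have hthreat : p ∈ threats β ρ y D m (v m) := by
    refine ⟨⟨x, hxp, hx m⟩, i, him, ?_⟩
    have := iterate_backward_orbit hv i (m - i)
    rw [Nat.add_sub_cancel' him.le] at this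
    rwa [this]
  have hle : ENNReal.ofReal (relVol β m p ^ c) ≤ ENNReal.ofReal δ :=
    (ENNReal.le_tsum (f := fun p : threats β ρ y D m (v m) => ENNReal.ofReal (relVol β m p ^ c))
      ⟨p, hthreat⟩).trans hm
  exact hδm.not_ge ((ENNReal.ofReal_le_ofReal_iff hδ).1 hle)

lemma exists_replies_of_mem_winFamily (hρ : 0 ≤ ρ) (hα : 0 ≤ α) (hc : 0 < c)
    (hS : S ∈ winFamily β α c ρ) (y : Fin n → ℝ) :
    ∃ D : ℕ → (Fin n → ℤ) → Set (ℝ × (Fin n → ℝ)),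
      (∀ m z, relWeight β c m (D m z) ≤ ENNReal.ofReal (α ^ c)) ∧
      ∀ v : ℕ → Fin n → ℤ, (∀ m, latticeParent β (v (m + 1)) = v m) →
        ∀ x, (∀ m, x ∈ cell β ρ y m (v m)) →
          (∀ m, ∀ p ∈ D m (v m), x ∉ gameBox β p.1 ρ p.2) → x ∈ S := by
  obtain ⟨ρ₁, hρ₁, σ, hlegal, hwin⟩ := hS
  refine ⟨fun m z => σ ρ m fun i => cellCenter β ρ y i ((latticeParent β)^[m - i] z),
    fun m z => relWeight_le_of_legalMove hβ hα hc (hlegal ρ m _ le_rfl hρ₁ fun i => ?_),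
    fun v hv x hx havoid => ?_⟩
  · have hpath : (latticeParent β)^[m - i] z
        = latticeParent β ((latticeParent β)^[m - (i + 1)] z) := by
      rw [← Function.iterate_succ_apply' (latticeParent β), Nat.succ_eq_add_one,
        ← Nat.sub_sub, Nat.sub_add_cancel (Nat.sub_pos_of_lt i.2)]
    simp only [Fin.val_succ, Fin.val_castSucc, gameBox_add_two_cellCenter, hpath]
    exact cell_succ_subset hβ hρ
  · have hpath (m : ℕ) (i : Fin (m + 1)) : (latticeParent β)^[m - i] (v m) = v i := by
      have := iterate_backward_orbit hv i (m - i)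
      rwa [Nat.add_sub_cancel' i.is_le] at this
    simp only [hpath] at havoid
    refine hwin ρ (fun m => cellCenter β ρ y m (v m)) le_rfl hρ₁ (fun m => ?_) x hx
      (by simpa using havoid)
    rw [gameBox_add_two_cellCenter, ← hv m]
    exact cell_succ_subset hβ hρ

theorem exists_coding_of_mem_winFamily (hn : 0 < n) (hρ : 0 < ρ) (hα : 0 < α)
    (hc : c ∈ Set.Ioo (0 : ℝ) 1) (hδ : δ ∈ Set.Ioo (0 : ℝ) 1)
    (hbudget : α ^ c ≤ δ ^ 2 * (1 - (∏ j, β j) ^ (1 - c))) {N : ℕ} (hN₀ : 0 < N) (hNα : N * α ≤ δ)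
    (hN : ((∏ j, β j) ^ (1 - c)) ^ N ≤ 2 * δ) (hS : S ∈ winFamily β α c ρ) {M : ℕ}
    (hM : M ≤ ⌈survivalRatio β δ N * ((∏ j, β j) ^ N)⁻¹⌉₊) :
    ∃ (code : ∀ k, (Fin k → Fin M) → Fin n → ℤ) (F : (ℕ → Fin M) → Fin n → ℝ),
      (∀ k, Function.Injective (code k)) ∧ (∀ ω, F ω ∈ S ∩ gameBox β 1 ρ y) ∧
      ∀ ω k, F ω ∈ cell β ρ y (k * N) (code k fun i => ω i) := by
  classical
  obtain ⟨D, hD, hwin⟩ := exists_replies_of_mem_winFamily hβ hρ.le hα.le hc.1 hS y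
  have hbranch (k : ℕ) (z : Fin n → ℤ) (hz : IsGood β c δ ρ y D (k * N) z) :
      ∃ T : Finset (Fin n → ℤ), M ≤ T.card ∧
        ∀ v ∈ T, (latticeParent β)^[N] v = z ∧ IsGood β c δ ρ y D ((k + 1) * N) v := by
    refine ⟨(descendants β N z).filter fun v => IsGood β c δ ρ y D ((k + 1) * N) v,
      hM.trans (Nat.ceil_le.2 ?_), fun v hv => ?_⟩
    · rw [add_mul, one_mul]
      exact survivalRatio_mul_le_card_isGood hn hβ hρ hα hc hδ hbudget hNα hN hD hz hN₀
    · rwa [Finset.mem_filter, mem_descendants hβ] at hv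
  obtain ⟨code, hinj, hroot, hparent, hgood⟩ :=
    exists_injective_coding (z₀ := 0) (by simpa using isGood_zero) hbranch
  have hpoint (ω : ℕ → Fin M) : ∃ x ∈ S ∩ gameBox β 1 ρ y,
      ∀ k, x ∈ cell β ρ y (k * N) (code k fun i => ω i) := by
    obtain ⟨v, hv, hvcode⟩ := exists_backward_orbit_of_iterate hN₀
      (w := fun k => code k fun i => ω i) fun k => hparent k fun i => ω i
    obtain ⟨x, hx⟩ := exists_mem_cells hβ hρ.le (y := y) hv
    have hfrequent : ∃ᶠ m in Filter.atTop, IsGood β c δ ρ y D m (v m) :=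
      Filter.frequently_atTop.2 fun k =>
        ⟨k * N, Nat.le_mul_of_pos_right k hN₀, by rw [hvcode]; exact hgood k _⟩
    refine ⟨x, ⟨hwin v hv x hx fun m p hp =>
      notMem_gameBox_of_frequently_isGood hβ hn hc.1 hδ.1.le hv hx hfrequent hp, ?_⟩,
      fun k => hvcode k ▸ hx (k * N)⟩
    have hzero : v 0 = 0 := by simpa [hroot] using hvcode 0
    rw [← cell_zero_zero, ← hzero]
    exact hx 0
  choose F hFS hFcell using hpoint
  exact ⟨code, F, hinj, hFS, hFcell⟩

end Coding

end PotentialGame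

namespace PotentialGame

section Dimension

variable {n : ℕ} {β : Fin n → ℝ} {ρ : ℝ} {y : Fin n → ℝ} {N M : ℕ}
  {code : ∀ k, (Fin k → Fin M) → Fin n → ℤ} {F : (ℕ → Fin M) → Fin n → ℝ}
  (hβ : ∀ j, β j ∈ Set.Ioo (0 : ℝ) (1 / 5)) (hρ : 0 < ρ)

include hβ

lemma tendsto_cellCenter (hN : 0 < N) {z : ℕ → Fin n → ℤ} {x : Fin n → ℝ}
    (hx : ∀ k, x ∈ cell β ρ y (k * N) (z k)) :
    Filter.Tendsto (fun k => cellCenter β ρ y (k * N) (z k)) Filter.atTop (nhds x) := by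
  refine tendsto_pi_nhds.2 fun j => tendsto_iff_dist_tendsto_zero.2 ?_
  have hpow : Filter.Tendsto (fun m : ℕ => β j ^ m) Filter.atTop (nhds 0) :=
    tendsto_pow_atTop_nhds_zero_of_lt_one (hβ j).1.le (by linarith [(hβ j).2])
  have hlevel : Filter.Tendsto (fun k => k * N + 1) Filter.atTop Filter.atTop :=
    Filter.tendsto_atTop_mono
      (fun k => (Nat.le_mul_of_pos_right k hN).trans (Nat.le_succ _)) Filter.tendsto_id
  refine squeeze_zero (fun _ => dist_nonneg) (fun k => ?_)
    (by simpa using (hpow.comp hlevel).mul_const ρ)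
  rw [dist_comm, Real.dist_eq]
  exact mem_cell.1 (hx k) j

lemma measurable_of_mem_cell (hN : 0 < N)
    (hF : ∀ ω k, F ω ∈ cell β ρ y (k * N) (code k fun i => ω i)) : Measurable F := by
  have hlim (ω : ℕ → Fin M) : Filter.Tendsto
      (fun k => cellCenter β ρ y (k * N) (code k fun i => ω i)) Filter.atTop (nhds (F ω)) :=
    tendsto_cellCenter hβ hN (hF ω)
  refine measurable_of_tendsto_metrizable (fun k => ?_) (tendsto_pi_nhds.2 hlim)
  have hprefix : Measurable fun (ω : ℕ → Fin M) (i : Fin k) => ω i :=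
    measurable_pi_lambda _ fun i => measurable_pi_apply _
  exact (measurable_of_countable fun w => cellCenter β ρ y (k * N) (code k w)).comp hprefix

include hρ

lemma card_cells_meeting_closedBall_le {m : ℕ} {x : Fin n → ℝ} {r : ℝ}
    (hr : ∀ j, β j ^ (m + 1) ≤ r) (hr₀ : 0 ≤ r) {T : Finset (Fin n → ℤ)}
    (hT : ∀ z ∈ T, (cell β ρ y m z ∩ Metric.closedBall x r).Nonempty) :
    (T.card : ℝ) ≤ ((2 / ρ + 3) * r) ^ n * ((∏ j, β j) ^ (m + 1))⁻¹ := by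
  have hw (j : Fin n) : 0 < β j ^ (m + 1) := pow_pos (hβ j).1 _
  calc (T.card : ℝ) ≤ ∏ j, (2 * (r / (β j ^ (m + 1) * ρ)) + 3) := by
        refine card_cells_meeting_box_le hβ hρ (x := x) (y := y) (fun _ => hr₀) fun z hz => ?_
        obtain ⟨u, hu, hux⟩ := hT z hz
        exact ⟨u, hu, (dist_pi_le_iff hr₀).1 hux⟩
    _ ≤ ∏ j, ((2 / ρ + 3) * r * (β j ^ (m + 1))⁻¹) := by
        refine Finset.prod_le_prod (fun j _ => by have := hw j; positivity) fun j _ => ?_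
        have hone : 1 ≤ r * (β j ^ (m + 1))⁻¹ := by
          rw [← div_eq_mul_inv, one_le_div (hw j)]; exact hr j
        calc 2 * (r / (β j ^ (m + 1) * ρ)) + 3
            = 2 / ρ * (r * (β j ^ (m + 1))⁻¹) + 3 * 1 := by field_simp
          _ ≤ 2 / ρ * (r * (β j ^ (m + 1))⁻¹) + 3 * (r * (β j ^ (m + 1))⁻¹) := by gcongr
          _ = _ := by ring
    _ = _ := by
        rw [Finset.prod_mul_distrib, Finset.prod_inv_distrib, Finset.prod_pow]
        simp

variable {κ : ℝ} [NeZero M] (hM : κ * ((∏ j, β j) ^ N)⁻¹ ≤ M)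
  (hcode : ∀ k, Function.Injective (code k))
  (hF : ∀ ω k, F ω ∈ cell β ρ y (k * N) (code k fun i => ω i))

include hM hcode hF

lemma digitMeasure_preimage_closedBall_le (hκ : 0 < κ) {x : Fin n → ℝ} {r : ℝ} (hr₀ : 0 ≤ r)
    {k : ℕ} (hr : ∀ j, β j ^ (k * N + 1) ≤ r) :
    digitMeasure M (F ⁻¹' Metric.closedBall x r)
      ≤ ENNReal.ofReal (((2 / ρ + 3) * r) ^ n * (∏ j, β j)⁻¹ * (κ ^ k)⁻¹) := by
  classical
  have hP := prod_pos hβ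
  set P := ∏ j, β j
  let W : Finset (Fin k → Fin M) :=
    {w | (cell β ρ y (k * N) (code k w) ∩ Metric.closedBall x r).Nonempty}
  have hW : (W.card : ℝ) ≤ ((2 / ρ + 3) * r) ^ n * (P ^ (k * N + 1))⁻¹ := by
    rw [← Finset.card_image_of_injective W (hcode k)]
    refine card_cells_meeting_closedBall_le hβ hρ hr hr₀ (x := x) (y := y) fun z hz => ?_
    obtain ⟨w, hw, rfl⟩ := Finset.mem_image.1 hz
    exact (Finset.mem_filter.1 hw).2
  have hletters : ((M : ℝ)⁻¹) ^ k ≤ (κ ^ k)⁻¹ * P ^ (k * N) := by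
    calc ((M : ℝ)⁻¹) ^ k ≤ ((κ * (P ^ N)⁻¹)⁻¹) ^ k := by gcongr
      _ = (κ ^ k)⁻¹ * P ^ (k * N) := by
        rw [mul_inv, inv_inv, mul_pow, inv_pow, ← pow_mul, mul_comm N]
  have hM₀ : (0 : ℝ) < M := Nat.cast_pos.2 (NeZero.pos M)
  calc digitMeasure M (F ⁻¹' Metric.closedBall x r) ≤ W.card * (M : ℝ≥0∞)⁻¹ ^ k :=
        digitMeasure_le_card_mul _ W fun ω hω =>
          Finset.mem_filter.2 ⟨Finset.mem_univ _, F ω, hF ω k, hω⟩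
    _ = ENNReal.ofReal (W.card * (M : ℝ)⁻¹ ^ k) := by
        rw [ENNReal.ofReal_mul (by positivity), ENNReal.ofReal_pow (by positivity),
          ENNReal.ofReal_inv_of_pos hM₀, ENNReal.ofReal_natCast, ENNReal.ofReal_natCast]
    _ ≤ ENNReal.ofReal (((2 / ρ + 3) * r) ^ n * (P ^ (k * N + 1))⁻¹
          * ((κ ^ k)⁻¹ * P ^ (k * N))) := by gcongr
    _ = _ := by
        rw [pow_succ P]
        congr 1
        field_simp

variable (hN : 0 < N) {b s : ℝ} (hb : b ∈ Set.Ioo (0 : ℝ) 1) (hβb : ∀ j, β j ≤ b) (hs : 0 ≤ s)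
  (hbs : (b ^ N) ^ s ≤ κ)

include hN hb hβb hs hbs

lemma digitMeasure_preimage_closedBall_le_rpow {x : Fin n → ℝ} {r : ℝ} (hr₀ : 0 < r)
    (hr₁ : r ≤ 1) :
    digitMeasure M (F ⁻¹' Metric.closedBall x r) ≤ ENNReal.ofReal
      ((2 / ρ + 3) ^ n * (∏ j, β j)⁻¹ * ((b ^ N) ^ s)⁻¹ * r ^ ((n : ℝ) - s)) := by
  obtain ⟨hb₀, hb₁⟩ := hb
  have hP := prod_pos hβ
  obtain ⟨k, hlt, hle⟩ :=
    exists_nat_pow_near_of_lt_one hr₀ hr₁ (pow_pos hb₀ N) (pow_lt_one₀ hb₀.le hb₁ hN.ne')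
  have hκ : 0 < κ := (by positivity : 0 < (b ^ N) ^ s).trans_le hbs
  have hside (j : Fin n) : β j ^ ((k + 1) * N + 1) ≤ r := by
    calc β j ^ ((k + 1) * N + 1) ≤ β j ^ ((k + 1) * N) :=
          pow_le_pow_of_le_one (hβ j).1.le ((hβb j).trans hb₁.le) (Nat.le_succ _)
      _ ≤ b ^ ((k + 1) * N) := pow_le_pow_left₀ (hβ j).1.le (hβb j) _
      _ = (b ^ N) ^ (k + 1) := by rw [← pow_mul, mul_comm]
      _ ≤ r := hlt.le
  have hscale : (b ^ N) ^ s * r ^ s ≤ κ ^ (k + 1) := by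
    calc (b ^ N) ^ s * r ^ s = (b ^ N * r) ^ s :=
          (Real.mul_rpow (by positivity) hr₀.le).symm
      _ ≤ ((b ^ N) ^ (k + 1)) ^ s := by rw [pow_succ']; gcongr
      _ = ((b ^ N) ^ s) ^ (k + 1) := (Real.rpow_pow_comm (by positivity) s (k + 1)).symm
      _ ≤ κ ^ (k + 1) := by gcongr
  refine (digitMeasure_preimage_closedBall_le hβ hρ hM hcode hF hκ hr₀.le hside).trans
    (ENNReal.ofReal_le_ofReal ?_)
  calc ((2 / ρ + 3) * r) ^ n * (∏ j, β j)⁻¹ * (κ ^ (k + 1))⁻¹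
      ≤ ((2 / ρ + 3) * r) ^ n * (∏ j, β j)⁻¹ * ((b ^ N) ^ s * r ^ s)⁻¹ := by gcongr
    _ = _ := by
        rw [Real.rpow_sub hr₀, Real.rpow_natCast, mul_pow, mul_inv]
        ring

theorem le_dimH_of_coding {E : Set (Fin n → ℝ)} (hFE : ∀ ω, F ω ∈ E) :
    ENNReal.ofReal ((n : ℝ) - s) ≤ dimH E := by
  have hP := prod_pos hβ
  have hb₀ := hb.1
  have hmeas : Measurable F := measurable_of_mem_cell hβ hN hF
  have hsupport : (digitMeasure M).map F E ≠ 0 := by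
    refine ((zero_lt_one' ℝ≥0∞).trans_le ?_).ne'
    calc 1 = digitMeasure M (F ⁻¹' E) := by
          rw [Set.eq_univ_of_forall (s := F ⁻¹' E) hFE, measure_univ]
      _ ≤ _ := Measure.le_map_apply hmeas.aemeasurable E
  refine le_dimH_of_measure_closedBall_le hsupport
    (C := (2 / ρ + 3) ^ n * (∏ j, β j)⁻¹ * ((b ^ N) ^ s)⁻¹) (by positivity) one_pos
    fun x r hr₀ hr₁ => ?_
  rw [Measure.map_apply hmeas Metric.isClosed_closedBall.measurableSet]
  exact digitMeasure_preimage_closedBall_le_rpow hβ hρ hM hcode hF hN hb hβb hs hbs hr₀ hr₁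

end Dimension

end PotentialGame

namespace PotentialGame

section Parameters

variable {α δ x : ℝ}

lemma le_two_mul_floor_div_mul (hα : 0 < α) (hαδ : α ≤ δ) : δ ≤ 2 * (⌊δ / α⌋₊ * α) := by
  have hone : (1 : ℝ) ≤ ⌊δ / α⌋₊ := Nat.one_le_cast.2 (Nat.floor_pos.2 ((one_le_div hα).2 hαδ))
  have hlt : δ < (⌊δ / α⌋₊ + 1) * α := (div_lt_iff₀ hα).1 (Nat.lt_floor_add_one _)
  nlinarith

lemma le_floor_div_mul {L : ℝ} (hα : 0 < α) (hαδ : α ≤ δ) (hL : 0 ≤ L) :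
    L ≤ ⌊δ / α⌋₊ * (2 * δ⁻¹ * L * α) := by
  have hδ : 0 < δ := hα.trans_le hαδ
  calc L = δ * (δ⁻¹ * L) := by field_simp
    _ ≤ 2 * (⌊δ / α⌋₊ * α) * (δ⁻¹ * L) := by
        gcongr
        exact le_two_mul_floor_div_mul hα hαδ
    _ = ⌊δ / α⌋₊ * (2 * δ⁻¹ * L * α) := by ring

lemma lt_of_le_sq_mul_one_sub (hδ : δ ∈ Set.Ioo (0 : ℝ) 1) (hx : 0 < x)
    (hαx : α ≤ δ ^ 2 * (1 - x)) : α < δ := by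
  obtain ⟨hδ₀, hδ₁⟩ := hδ
  calc α ≤ δ ^ 2 * (1 - x) := hαx
    _ < δ ^ 2 * 1 := by gcongr; linarith
    _ ≤ δ := by nlinarith

lemma pow_floor_div_le (hα : 0 < α) (hδ : δ ∈ Set.Ioo (0 : ℝ) 1) (hx₀ : 0 < x) (hx₁ : x ≤ 1)
    (hαx : α ≤ δ ^ 2 * (1 - x)) : x ^ ⌊δ / α⌋₊ ≤ 2 * δ := by
  have hδ₀ := hδ.1
  set N := ⌊δ / α⌋₊
  have hNα : δ ≤ 2 * (N * α) :=
    le_two_mul_floor_div_mul hα (lt_of_le_sq_mul_one_sub hδ hx₀ hαx).le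
  have hgap : 1 ≤ 2 * δ * (N * (1 - x)) := by
    refine le_of_mul_le_mul_left ?_ hδ₀
    calc δ * 1 ≤ 2 * (N * α) := by rwa [mul_one]
      _ ≤ 2 * (N * (δ ^ 2 * (1 - x))) := by gcongr
      _ = δ * (2 * δ * (N * (1 - x))) := by ring
  calc x ^ N ≤ x ^ N * (2 * δ * (N * (1 - x))) := le_mul_of_one_le_right (by positivity) hgap
    _ = 2 * δ * (x ^ N * (N * (1 - x))) := by ring
    _ ≤ 2 * δ * 1 := by
        gcongr
        exact pow_mul_natCast_mul_one_sub_le_one hx₀.le hx₁ N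
    _ = 2 * δ := mul_one _

lemma pow_rpow_div_abs_log_le {b κ t : ℝ} {N : ℕ} (hb : b ∈ Set.Ioo (0 : ℝ) 1) (hκ : 0 < κ)
    (ht : |Real.log κ| ≤ N * t) : (b ^ N) ^ (t / |Real.log b|) ≤ κ := by
  have hb₀ := hb.1
  have hlog : Real.log b < 0 := Real.log_neg hb₀ hb.2
  rw [← Real.log_le_log_iff (by positivity) hκ, Real.log_rpow (by positivity), Real.log_pow,
    abs_of_neg hlog]
  calc t / -Real.log b * (N * Real.log b) = -(N * t) := by field_simp [hlog.ne]
    _ ≤ -|Real.log κ| := neg_le_neg ht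
    _ ≤ Real.log κ := neg_abs_le _

end Parameters

theorem nonempty_and_le_dimH_of_mem_winFamily {n : ℕ} {β : Fin n → ℝ} {α b c δ ρ s : ℝ}
    {S : Set (Fin n → ℝ)} {N : ℕ} (hβ : ∀ j, β j ∈ Set.Ioo (0 : ℝ) (1 / 5)) (hn : 0 < n)
    (hρ : 0 < ρ) (hα : 0 < α) (hc : c ∈ Set.Ioo (0 : ℝ) 1) (hδ : δ ∈ Set.Ioo (0 : ℝ) 1)
    (hbudget : α ^ c ≤ δ ^ 2 * (1 - (∏ j, β j) ^ (1 - c))) (hN₀ : 0 < N) (hNα : N * α ≤ δ)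
    (hN : ((∏ j, β j) ^ (1 - c)) ^ N ≤ 2 * δ) (hS : S ∈ winFamily β α c ρ)
    (hb : b ∈ Set.Ioo (0 : ℝ) 1) (hβb : ∀ j, β j ≤ b) (hs : 0 ≤ s)
    (hbs : (b ^ N) ^ s ≤ survivalRatio β δ N) (y : Fin n → ℝ) :
    (S ∩ gameBox β 1 ρ y).Nonempty ∧
      ENNReal.ofReal ((n : ℝ) - s) ≤ dimH (S ∩ gameBox β 1 ρ y) := by
  have hP := prod_pos hβ
  have hκ : 0 < survivalRatio β δ N := (Real.rpow_pos_of_pos (pow_pos hb.1 N) s).trans_le hbs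
  have : NeZero ⌈survivalRatio β δ N * ((∏ j, β j) ^ N)⁻¹⌉₊ :=
    ⟨(Nat.ceil_pos.2 (by positivity)).ne'⟩
  obtain ⟨code, F, hcode, hFS, hFcell⟩ :=
    exists_coding_of_mem_winFamily hβ hn hρ hα hc hδ hbudget hN₀ hNα hN hS le_rfl (y := y)
  exact ⟨⟨F 0, hFS 0⟩,
    le_dimH_of_coding hβ hρ (Nat.le_ceil _) hcode hFcell hN₀ hb hβb hs hbs hFS⟩

end PotentialGame

/-- **Main dimension theorem for winning sets.**  Let `A` be the diagonal `(n × n)`-matrix with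
diagonal entries `β j ∈ (0, 1/5)`, let `α, c ∈ (0,1)` and `ρ₂ > 0`.  Suppose there exists
`δ ∈ (0,1)` with `α^c ≤ δ²(1 − (∏_j β_j)^{1−c})` and
`3^{−n} ∏_j (1 − 5 β_j^{⌊δ/α⌋}) > 8^n (1 + 2^{2n+1}) δ`.  Then for every
`S ∈ 𝒮(α, A, c, ρ₂)` and every `y ∈ ℝⁿ`, the set `S ∩ (A(B[0,ρ₂]) + y)` is non-empty and
`dim_H (S ∩ (A(B[0,ρ₂]) + y)) ≥ max{n − K₁ α / |log β_max|, 0}`, where `β_max = max_j β_j` and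
`K₁ = 2 δ⁻¹ |log(3^{−n} ∏_j (1 − 5 β_j^{⌊δ/α⌋}) − 8^n (1 + 2^{2n+1}) δ)|`. -/
theorem winning_set_dimension {n : ℕ} (hn : 0 < n)
    (β : Fin n → ℝ) (hβ : ∀ j, β j ∈ Set.Ioo (0 : ℝ) (1 / 5))
    (α c : ℝ) (hα : α ∈ Set.Ioo (0 : ℝ) 1) (hc : c ∈ Set.Ioo (0 : ℝ) 1)
    (ρ₂ : ℝ) (hρ₂ : 0 < ρ₂) (δ : ℝ) (hδ : δ ∈ Set.Ioo (0 : ℝ) 1)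
    (h1 : α ^ c ≤ δ ^ 2 * (1 - (∏ j, β j) ^ (1 - c)))
    (h2 : (3 : ℝ)⁻¹ ^ n * ∏ j, (1 - 5 * β j ^ ⌊δ / α⌋₊)
            > 8 ^ n * (1 + 2 ^ (2 * n + 1)) * δ)
    (βmax : ℝ) (hβmax : IsGreatest (Set.range β) βmax)
    (K₁ : ℝ)
    (hK₁ : K₁ = 2 * δ⁻¹ *
      |Real.log ((3 : ℝ)⁻¹ ^ n * ∏ j, (1 - 5 * β j ^ ⌊δ / α⌋₊)
          - 8 ^ n * (1 + 2 ^ (2 * n + 1)) * δ)|)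
    (S : Set (Fin n → ℝ)) (hS : S ∈ winFamily β α c ρ₂) (y : Fin n → ℝ) :
    (S ∩ gameBox β 1 ρ₂ y).Nonempty ∧
      ENNReal.ofReal ((n : ℝ) - K₁ * α / |Real.log βmax|) ≤ dimH (S ∩ gameBox β 1 ρ₂ y) := by
  have hP := PotentialGame.prod_pos hβ
  have hx₀ : 0 < (∏ j, β j) ^ (1 - c) := Real.rpow_pos_of_pos hP _
  have hx₁ : (∏ j, β j) ^ (1 - c) ≤ 1 :=
    Real.rpow_le_one hP.le (PotentialGame.prod_le_one hβ) (sub_nonneg.2 hc.2.le)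
  have hαx : α ≤ δ ^ 2 * (1 - (∏ j, β j) ^ (1 - c)) :=
    (Real.self_le_rpow_of_le_one hα.1.le hα.2.le hc.2.le).trans h1
  have hαδ : α < δ := PotentialGame.lt_of_le_sq_mul_one_sub hδ hx₀ hαx
  have hNα : ⌊δ / α⌋₊ * α ≤ δ :=
    (le_div_iff₀ hα.1).1 (Nat.floor_le (div_pos hδ.1 hα.1).le)
  have hb : βmax ∈ Set.Ioo (0 : ℝ) 1 := by
    obtain ⟨j, rfl⟩ := hβmax.1
    exact ⟨(hβ j).1, (hβ j).2.trans (by norm_num)⟩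
  have hlog : |Real.log (PotentialGame.survivalRatio β δ ⌊δ / α⌋₊)| ≤ ⌊δ / α⌋₊ * (K₁ * α) := by
    rw [hK₁, ← PotentialGame.survivalRatio]
    exact PotentialGame.le_floor_div_mul hα.1 hαδ.le (abs_nonneg _)
  have hK₁α : 0 ≤ K₁ * α / |Real.log βmax| := by
    have := hα.1; have := hδ.1; rw [hK₁]; positivity
  exact PotentialGame.nonempty_and_le_dimH_of_mem_winFamily hβ hn hρ₂ hα.1 hc hδ h1
    (Nat.floor_pos.2 ((one_le_div hα.1).2 hαδ.le)) hNα
    (PotentialGame.pow_floor_div_le hα.1 hδ hx₀ hx₁ hαx) hS hb (fun j => hβmax.2 ⟨j, rfl⟩) hK₁α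
    (PotentialGame.pow_rpow_div_abs_log_le hb (sub_pos.2 h2) hlog) y
end

section
/- Positive Hausdorff dimension of winning sets: Let n ∈ ℕ, let A be a diagonal (n×n)-matrix with diagonal entries β₁₁,…,β_nn ∈ (0,1/5), let α, c ∈ (0,1) and ρ₂ > 0, and suppose there exists δ ∈ (0,1) such that α^c ≤ δ²(1 − (∏_{j=1}^n β_jj)^{1−c}) and 3^{−n}∏_{j=1}^n (1 − 5β_jj^{⌊δα^{−1}⌋}) > 8^n(1 + 2^{2n+1})δ. Set β_max = max_j β_jj and K₁ = 2δ^{−1}|log(3^{−n}∏_{j=1}^n (1 − 5β_jj^{⌊δα^{−1}⌋}) − 8^n(1 + 2^{2n+1})δ)|. If additionally α < K₁^{−1}·n·log(1/β_max), then for every S ∈ 𝒮(α,A,c,ρ₂) and every y ∈ ℝ^n, dim_H(S ∩ (A(B[0,ρ₂]) + y)) > 0. -/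
open scoped ENNReal

/-!
Call the density of a measure on a set its mass divided by the volume, and write `P = ∏ j, β j`.
Spread over each box `A^q(B[0,r]) + y` deleted by Player II, enlarged by the factor `3`, the
density `P ^ (-(1 - c) * q)`. A cell of level `t` on which the total has density below that of a
single box of level `q ≤ t` cannot meet such a box. By pigeonhole Player I can always move to a
smaller cell without raising the density. In units of the density of a box of the current level,
each turn therefore multiplies the density by `P ^ (1 - c)`, while the boxes deleted on that turn
add at most `6 ^ n * α ^ c`. If `6 ^ n * α ^ c < 1 - P ^ (1 - c)` it stays below `1` forever, so
Player I evades all deleted boxes and a winning set meets every box with which Player I can start.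

A set that is null for the `d`-dimensional Hausdorff measure has covers by boxes of arbitrarily
small total cost, as long as `P ^ c ≤ β j ^ d`. At the price of a slightly larger `α`, Player II can
delete such a cover on the first turn. So a winning set minus a null set still meets every starting
box, and the intersection of a winning set with a starting box is not null.
-/

open MeasureTheory

section Grid

theorem exists_measure_le_mul_of_iUnion {X ι : Type*} [MeasurableSpace X] [Finite ι] [Nonempty ι]
    {μ ν : Measure X} {K : ℝ≥0∞} {V : ι → Set X} (hV : ∀ i, MeasurableSet (V i))
    (hdisj : Pairwise (Function.onFun Disjoint V)) (h : ν (⋃ i, V i) ≤ K * μ (⋃ i, V i)) :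
    ∃ i, ν (V i) ≤ K * μ (V i) := by
  cases nonempty_fintype ι
  by_contra! hlt
  simp only [measure_iUnion hdisj hV, tsum_fintype, Finset.mul_sum] at h
  exact h.not_gt (ENNReal.sum_lt_sum_of_nonempty Finset.univ_nonempty fun i _ => hlt i)

theorem iUnion_Ioc_add_nat_mul {l : ℝ} (hl : 0 ≤ l) (a : ℝ) (k : ℕ) :
    ⋃ i : Fin k, Set.Ioc (a + i * l) (a + (i + 1) * l) = Set.Ioc a (a + k * l) := by
  have hmono : Monotone fun i : ℕ => a + i * l := fun i i' h => by
    dsimp only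
    gcongr
  have h := hmono.biUnion_Ico_Ioc_map_succ 0 k
  simp only [Set.mem_Ico, zero_le, true_and, Order.succ_eq_add_one, Nat.cast_add, Nat.cast_one,
    CharP.cast_eq_zero, zero_mul, add_zero] at h
  rw [← h]
  ext x
  simp only [Set.mem_iUnion, Fin.exists_iff, exists_prop]

theorem exists_grid_cell_measure_le {ι : Type*} [Finite ι] {μ ν : Measure (ι → ℝ)} {K : ℝ≥0∞}
    {a l : ι → ℝ} {k : ι → ℕ} (hl : ∀ j, 0 ≤ l j) (hk : ∀ j, k j ≠ 0)
    (h : ν (Set.univ.pi fun j => Set.Ioc (a j) (a j + k j * l j)) ≤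
      K * μ (Set.univ.pi fun j => Set.Ioc (a j) (a j + k j * l j))) :
    ∃ i : ∀ j, Fin (k j),
      ν (Set.univ.pi fun j => Set.Ioc (a j + i j * l j) (a j + (i j + 1) * l j)) ≤
        K * μ (Set.univ.pi fun j => Set.Ioc (a j + i j * l j) (a j + (i j + 1) * l j)) := by
  have (j : ι) : NeZero (k j) := ⟨hk j⟩
  refine exists_measure_le_mul_of_iUnion (fun i => .univ_pi fun _ => measurableSet_Ioc) ?_ ?_
  · intro i i' hii'
    obtain ⟨j, hj⟩ := Function.ne_iff.1 hii'
    refine Set.Disjoint.set_pi (Set.mem_univ j) ?_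
    have hmono : Monotone fun i : ℕ => a j + i * l j := fun i i' h => by
      have := hl j
      dsimp only
      gcongr
    simpa using hmono.pairwise_disjoint_on_Ioc_succ (Fin.val_injective.ne hj)
  · rw [Set.iUnion_univ_pi fun j (i : Fin (k j)) =>
      Set.Ioc (a j + i * l j) (a j + (i + 1) * l j)]
    simpa only [iUnion_Ioc_add_nat_mul (hl _)] using h

theorem exists_div_nat_mem_Ico {h l : ℝ} (hh : 0 < h) (hl : h ≤ l) :
    ∃ k : ℕ, k ≠ 0 ∧ l / k ∈ Set.Ico h (2 * h) := by
  have hk : 1 ≤ ⌊l / h⌋₊ := Nat.one_le_floor_iff _ |>.2 ((one_le_div hh).2 hl)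
  have hkR : (1 : ℝ) ≤ ⌊l / h⌋₊ := mod_cast hk
  refine ⟨⌊l / h⌋₊, by lia, ?_, ?_⟩
  · have := Nat.floor_le (div_nonneg (hh.le.trans hl) hh.le)
    rw [le_div_iff₀ hh] at this
    rwa [le_div_iff₀ (by positivity), mul_comm]
  · have := Nat.lt_floor_add_one (l / h)
    rw [div_lt_iff₀ hh] at this
    rw [div_lt_iff₀ (by positivity)]
    nlinarith

theorem exists_subbox_measure_le {ι : Type*} [Finite ι] {μ ν : Measure (ι → ℝ)} {K : ℝ≥0∞}
    {a b h : ι → ℝ} (hh : ∀ j, 0 < h j) (hab : ∀ j, h j ≤ b j - a j)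
    (hν : ν (Set.univ.pi fun j => Set.Ioc (a j) (b j)) ≤
      K * μ (Set.univ.pi fun j => Set.Ioc (a j) (b j))) :
    ∃ a' b' : ι → ℝ, a ≤ a' ∧ b' ≤ b ∧ (∀ j, b' j - a' j ∈ Set.Ico (h j) (2 * h j)) ∧
      ν (Set.univ.pi fun j => Set.Ioc (a' j) (b' j)) ≤
        K * μ (Set.univ.pi fun j => Set.Ioc (a' j) (b' j)) := by
  choose k hk hmesh using fun j => exists_div_nat_mem_Ico (hh j) (hab j)
  set l : ι → ℝ := fun j => (b j - a j) / k j with hl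
  have hkl (j : ι) : a j + k j * l j = b j := by
    rw [hl, mul_div_cancel₀ _ (Nat.cast_ne_zero.2 (hk j)), add_sub_cancel]
  have hl0 (j : ι) : 0 < l j := (hh j).trans_le (hmesh j).1
  obtain ⟨i, hi⟩ := exists_grid_cell_measure_le (a := a) (fun j => (hl0 j).le) hk
    (ν := ν) (μ := μ) (K := K) (by simpa only [hkl] using hν)
  refine ⟨_, _, fun j => ?_, fun j => ?_, fun j => ?_, hi⟩
  · exact le_add_of_nonneg_right (by have := hl0 j; positivity)
  · have hik : ((i j : ℕ) : ℝ) + 1 ≤ k j := mod_cast (i j).2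
    have := hl0 j
    rw [← hkl j]
    gcongr
  · convert hmesh j using 1
    ring

theorem exists_Icc_subset_and_subset {B h h' a b : ℝ} (hh : h' ≤ h) (hab : b - a ≤ 2 * h')
    (ha : B - h ≤ a) (hb : b ≤ B + h) :
    ∃ B' : ℝ, (B' - h' ≤ a ∧ b ≤ B' + h') ∧ B - h ≤ B' - h' ∧ B' + h' ≤ B + h := by
  refine ⟨max (B - h + h') (b - h'), ⟨?_, ?_⟩, ?_, ?_⟩
  · rcases max_cases (B - h + h') (b - h') with h | h <;> linarith
  · linarith [le_max_right (B - h + h') (b - h')]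
  · linarith [le_max_left (B - h + h') (b - h')]
  · rcases max_cases (B - h + h') (b - h') with h | h <;> linarith

end Grid

section GameBox

variable {n : ℕ} {β : Fin n → ℝ} {t r : ℝ}

theorem gameBox_eq_Icc (y : Fin n → ℝ) :
    gameBox β t r y = Set.Icc (fun j => y j - β j ^ t * r) (fun j => y j + β j ^ t * r) := by
  ext x
  simp only [gameBox, Set.mem_ofPred_eq, Set.mem_Icc, Pi.le_def, ← forall_and, abs_le]
  refine forall_congr' fun j => and_congr ?_ ?_ <;> constructor <;> intro h <;> linarith

theorem volume_gameBox (hβ : ∀ j, 0 ≤ β j) (hr : 0 ≤ r) (y : Fin n → ℝ) :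
    volume (gameBox β t r y) = ENNReal.ofReal ((2 * r) ^ n * (∏ j, β j) ^ t) := by
  have hside (j : Fin n) : y j + β j ^ t * r - (y j - β j ^ t * r) = 2 * r * β j ^ t := by ring
  rw [gameBox_eq_Icc, Real.volume_Icc_pi]
  simp only [hside]
  rw [← ENNReal.ofReal_prod_of_nonneg fun j _ => mul_nonneg (by positivity)
      (Real.rpow_nonneg (hβ j) t), Finset.prod_mul_distrib,
    Real.finsetProd_rpow _ _ fun j _ => hβ j]
  simp

theorem gameBox_mono_radius (hβ : ∀ j, 0 ≤ β j) {r' : ℝ} (h : r ≤ r') (y : Fin n → ℝ) :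
    gameBox β t r y ⊆ gameBox β t r' y := fun _ hx j =>
  (hx j).trans (mul_le_mul_of_nonneg_left h (Real.rpow_nonneg (hβ j) t))

end GameBox

section HausdorffCover

theorem exists_tsum_ediam_rpow_lt_of_hausdorffMeasure_eq_zero {X : Type*} [EMetricSpace X]
    [MeasurableSpace X] [BorelSpace X] {d : ℝ} (hd : 0 < d) {N : Set X} (hN : μH[d] N = 0)
    {ε : ℝ≥0∞} (hε : ε ≠ 0) :
    ∃ V : ℕ → Set X, N ⊆ ⋃ i, V i ∧ ∑' i, Metric.ediam (V i) ^ d < ε := by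
  rw [Measure.hausdorffMeasure_apply] at hN
  simp only [ENNReal.iSup_eq_zero] at hN
  have hlt := (hN 1 one_pos).trans_lt hε.bot_lt
  simp only [iInf_lt_iff] at hlt
  obtain ⟨V, hNV, -, hsum⟩ := hlt
  refine ⟨V, hNV, lt_of_le_of_lt (ENNReal.tsum_le_tsum fun i => ?_) hsum⟩
  rcases (V i).eq_empty_or_nonempty with hVi | hVi
  · simp [hVi, hd]
  · simp [hVi]

theorem exists_closedBall_cover_of_hausdorffMeasure_eq_zero {X : Type*} [MetricSpace X] [Nonempty X]
    [MeasurableSpace X] [BorelSpace X] {d : ℝ} (hd : 0 < d) {N : Set X} (hN : μH[d] N = 0)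
    {ε : ℝ≥0∞} (hε : ε ≠ 0) :
    ∃ (z : ℕ → X) (s : ℕ → ℝ), (∀ i, 0 < s i) ∧ N ⊆ ⋃ i, Metric.closedBall (z i) (s i) ∧
      ∑' i, ENNReal.ofReal (s i ^ d) < ε := by
  obtain ⟨V, hNV, hV⟩ := exists_tsum_ediam_rpow_lt_of_hausdorffMeasure_eq_zero hd hN
    (ENNReal.half_pos hε).ne'
  obtain ⟨e, he0, he⟩ := ENNReal.exists_pos_sum_of_countable' (ENNReal.half_pos hε).ne' ℕ
  set w : ℕ → ℝ≥0∞ := fun i => Metric.ediam (V i) ^ d + e i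
  have hsum : ∑' i, w i < ε := by
    rw [ENNReal.tsum_add, ← ENNReal.add_halves ε]
    exact ENNReal.add_lt_add hV he
  have hw_top (i : ℕ) : w i ^ d⁻¹ ≠ ⊤ :=
    (ENNReal.rpow_lt_top_of_nonneg (inv_nonneg.2 hd.le)
      (ENNReal.ne_top_of_tsum_ne_top hsum.ne_top i)).ne
  have hw_pos (i : ℕ) : 0 < w i := (he0 i).trans_le le_add_self
  have hball (i : ℕ) : ∃ z, V i ⊆ Metric.closedBall z (w i ^ d⁻¹).toReal := by
    rcases (V i).eq_empty_or_nonempty with hVi | ⟨z, hz⟩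
    · exact ⟨Classical.arbitrary X, by simp [hVi]⟩
    · refine ⟨z, fun x hx => ?_⟩
      rw [Metric.mem_closedBall, dist_edist]
      refine ENNReal.toReal_mono (hw_top i) ((Metric.edist_le_ediam_of_mem hx hz).trans ?_)
      rw [ENNReal.le_rpow_inv_iff hd]
      exact le_self_add
  choose z hz using hball
  refine ⟨z, fun i => (w i ^ d⁻¹).toReal, fun i => ENNReal.toReal_pos ?_ (hw_top i),
    hNV.trans (Set.iUnion_mono hz), ?_⟩
  · simp [(hw_pos i).ne', hd.le]
  · have hs (i : ℕ) : ENNReal.ofReal ((w i ^ d⁻¹).toReal ^ d) = w i := by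
      rw [ENNReal.toReal_rpow, ENNReal.ofReal_toReal, ENNReal.rpow_inv_rpow hd.ne']
      exact ENNReal.rpow_ne_top_of_nonneg hd.le (hw_top i)
    simpa only [hs] using hsum

end HausdorffCover

section DeletionMeasure

variable {n : ℕ} {β : Fin n → ℝ} {r c : ℝ} {T T' : Set (ℝ × (Fin n → ℝ))}

/-- The potential of a collection `T` of deleted boxes `A^q(B[0,r]) + y`, as a measure: each box
spreads the mass density `(∏ j, β j) ^ (-(1 - c) * q)` over its concentric enlargement by the
factor `3`. The factor makes the enlargement swallow every cell of sides at most
`2 * β j ^ q * r` that meets the box. -/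
noncomputable def deletionMeasure (β : Fin n → ℝ) (r c : ℝ) (T : Set (ℝ × (Fin n → ℝ))) :
    Measure (Fin n → ℝ) :=
  Measure.sum fun p : T => ENNReal.ofReal ((∏ j, β j) ^ (-(1 - c) * p.1.1)) •
    volume.restrict (gameBox β p.1.1 (3 * r) p.1.2)

theorem deletionMeasure_union_le :
    deletionMeasure β r c (T ∪ T') ≤ deletionMeasure β r c T + deletionMeasure β r c T' := by
  refine Measure.le_iff.2 fun s hs => ?_
  simp only [deletionMeasure, Measure.add_apply, Measure.sum_apply _ hs]
  exact ENNReal.tsum_union_le (fun p : ℝ × (Fin n → ℝ) =>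
    (ENNReal.ofReal ((∏ j, β j) ^ (-(1 - c) * p.1)) •
      volume.restrict (gameBox β p.1 (3 * r) p.2)) s) T T'

theorem deletionMeasure_univ (hβ : ∀ j, 0 < β j) (hr : 0 ≤ r) :
    deletionMeasure β r c T Set.univ =
      ENNReal.ofReal ((6 * r) ^ n) * ∑' p : T, ENNReal.ofReal ((∏ j, β j) ^ (c * p.1.1)) := by
  have hP : 0 < ∏ j, β j := Finset.prod_pos fun j _ => hβ j
  rw [deletionMeasure, Measure.sum_apply _ .univ, ← ENNReal.tsum_mul_left]
  refine tsum_congr fun p => ?_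
  rw [Measure.smul_apply, Measure.restrict_apply_univ, smul_eq_mul,
    volume_gameBox (fun j => (hβ j).le) (by positivity), ← ENNReal.ofReal_mul (by positivity),
    ← ENNReal.ofReal_mul (by positivity), mul_left_comm, ← Real.rpow_add hP]
  ring_nf

theorem le_deletionMeasure {p : ℝ × (Fin n → ℝ)} (hp : p ∈ T) {V : Set (Fin n → ℝ)}
    (hV : V ⊆ gameBox β p.1 (3 * r) p.2) :
    ENNReal.ofReal ((∏ j, β j) ^ (-(1 - c) * p.1)) * volume V ≤ deletionMeasure β r c T V := by
  have h := Measure.le_sum (fun p : T => ENNReal.ofReal ((∏ j, β j) ^ (-(1 - c) * p.1.1)) •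
    volume.restrict (gameBox β p.1.1 (3 * r) p.1.2)) ⟨p, hp⟩ V
  rwa [Measure.smul_apply, Measure.restrict_eq_self _ hV] at h

end DeletionMeasure

section LegalMove

variable {n : ℕ} {β : Fin n → ℝ} {α α' c : ℝ} {m : ℕ} {M E : Set (ℝ × (Fin n → ℝ))}

theorem legalMove_iff_of_pos (hc : 0 < c) :
    LegalMove β α c m M ↔ M.Countable ∧ (∀ p ∈ M, 1 ≤ p.1) ∧
      ∑' p : M, ENNReal.ofReal ((∏ j, β j ^ p.1.1) ^ c) ≤
        ENNReal.ofReal ((α * ∏ j, β j ^ (m + 1 : ℝ)) ^ c) := by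
  rw [LegalMove, if_pos hc]

theorem LegalMove.tsum_le (hβ : ∀ j, 0 ≤ β j) (hα : 0 ≤ α) (hc : 0 < c)
    (h : LegalMove β α c m M) :
    ∑' p : M, ENNReal.ofReal ((∏ j, β j) ^ (c * p.1.1)) ≤
      ENNReal.ofReal (α ^ c * (∏ j, β j) ^ (c * (m + 1))) := by
  have hP : 0 ≤ ∏ j, β j := Finset.prod_nonneg fun j _ => hβ j
  have hsum := ((legalMove_iff_of_pos hc).1 h).2.2
  simp only [Real.finsetProd_rpow _ _ fun j _ => hβ j, ← Real.rpow_mul hP, mul_comm _ c] at hsum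
  rwa [Real.mul_rpow hα (by positivity), ← Real.rpow_mul hP, mul_comm _ c] at hsum

theorem LegalMove.lt_fst (hβ : ∀ j, β j ∈ Set.Ioo (0 : ℝ) 1) (hα : 0 ≤ α) (hα1 : α < 1)
    (hc : 0 < c) (h : LegalMove β α c m M) {p : ℝ × (Fin n → ℝ)} (hp : p ∈ M) :
    (m : ℝ) + 1 < p.1 := by
  have hP : 0 < ∏ j, β j := Finset.prod_pos fun j _ => (hβ j).1
  have hP1 : ∏ j, β j ≤ 1 := Finset.prod_le_one (fun j _ => (hβ j).1.le) fun j _ => (hβ j).2.le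
  by_contra! hle
  have hweight : (∏ j, β j) ^ (c * p.1) ≤ α ^ c * (∏ j, β j) ^ (c * (m + 1)) := by
    refine (ENNReal.ofReal_le_ofReal_iff (by positivity)).1 (le_trans ?_
      (h.tsum_le (fun j => (hβ j).1.le) hα hc))
    exact ENNReal.le_tsum (f := fun p : M => ENNReal.ofReal ((∏ j, β j) ^ (c * p.1.1))) ⟨p, hp⟩
  have hpow : (∏ j, β j) ^ (c * (m + 1)) ≤ (∏ j, β j) ^ (c * p.1) :=
    Real.rpow_le_rpow_of_exponent_ge hP hP1 (by gcongr)
  have hαc : α ^ c < 1 := Real.rpow_lt_one hα hα1 hc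
  have := Real.rpow_pos_of_pos hP (c * (m + 1))
  nlinarith

theorem LegalMove.union (hα : 0 ≤ α) (hαα' : α ≤ α') (hβ : ∀ j, 0 ≤ β j) (hc : 0 < c)
    (h : LegalMove β α c m M) (hE : E.Countable) (hE1 : ∀ p ∈ E, 1 ≤ p.1)
    (hEsum : ∑' p : E, ENNReal.ofReal ((∏ j, β j ^ p.1.1) ^ c) ≤
      ENNReal.ofReal ((α' * ∏ j, β j ^ (m + 1 : ℝ)) ^ c) -
        ENNReal.ofReal ((α * ∏ j, β j ^ (m + 1 : ℝ)) ^ c)) :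
    LegalMove β α' c m (M ∪ E) := by
  rw [legalMove_iff_of_pos hc] at h ⊢
  obtain ⟨hM, hM1, hMsum⟩ := h
  have hP : 0 ≤ ∏ j, β j ^ (m + 1 : ℝ) := Finset.prod_nonneg fun j _ => Real.rpow_nonneg (hβ j) _
  refine ⟨hM.union hE, fun p hp => hp.elim (hM1 p) (hE1 p), ?_⟩
  refine (ENNReal.tsum_union_le (fun p : ℝ × (Fin n → ℝ) =>
    ENNReal.ofReal ((∏ j, β j ^ p.1) ^ c)) M E).trans ((add_le_add hMsum hEsum).trans ?_)
  rw [add_tsub_cancel_of_le (by gcongr)]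

end LegalMove

section Position

/-- What Player I keeps track of while evading the deleted boxes: the centre of the box just
played, and the lower and upper corner of a cell inside that box which is to contain all further
cells. -/
structure Position (n : ℕ) where
  center : Fin n → ℝ
  lo : Fin n → ℝ
  hi : Fin n → ℝ

/-- The half-open cell of a position; half-open, so that the cells of a grid are disjoint. -/
def Position.cell {n : ℕ} (s : Position n) : Set (Fin n → ℝ) :=
  Set.univ.pi fun j => Set.Ioc (s.lo j) (s.hi j)

/-- A position is admissible at level `t` if its cell lies in the box `A^t(B[0,r]) + center` and
has sides between half the sides of that box and the sides themselves. -/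
structure Position.IsAdmissible {n : ℕ} (β : Fin n → ℝ) (r t : ℝ) (s : Position n) : Prop where
  le_side : ∀ j, β j ^ t * r ≤ s.hi j - s.lo j
  side_le : ∀ j, s.hi j - s.lo j ≤ 2 * (β j ^ t * r)
  le_lo : ∀ j, s.center j - β j ^ t * r ≤ s.lo j
  hi_le : ∀ j, s.hi j ≤ s.center j + β j ^ t * r

variable {n : ℕ} {β : Fin n → ℝ} {r c t : ℝ} {s : Position n} {T : Set (ℝ × (Fin n → ℝ))}

theorem Position.cell_subset_Icc : s.cell ⊆ Set.Icc s.lo s.hi := fun _ hx =>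
  ⟨fun j => (hx j trivial).1.le, fun j => (hx j trivial).2⟩

theorem Position.IsAdmissible.le_volume_cell (h : s.IsAdmissible β r t) (hβ : ∀ j, 0 ≤ β j)
    (hr : 0 ≤ r) : ENNReal.ofReal (r ^ n * (∏ j, β j) ^ t) ≤ volume s.cell := by
  have hside (j : Fin n) : 0 ≤ β j ^ t * r := mul_nonneg (Real.rpow_nonneg (hβ j) t) hr
  have hprod : ∏ j, β j ^ t * r = r ^ n * (∏ j, β j) ^ t := by
    rw [Finset.prod_mul_distrib, Real.finsetProd_rpow _ _ fun j _ => hβ j]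
    simp [mul_comm]
  rw [Position.cell, Real.volume_pi_Ioc, ← hprod, ENNReal.ofReal_prod_of_nonneg fun j _ => hside j]
  exact Finset.prod_le_prod' fun j _ => ENNReal.ofReal_le_ofReal (h.le_side j)

theorem Position.volume_cell_ne_top : volume s.cell ≠ ⊤ := by
  rw [Position.cell, Real.volume_pi_Ioc]
  exact ENNReal.prod_ne_top fun _ _ => ENNReal.ofReal_ne_top

theorem Position.IsAdmissible.lo_le_hi (h : s.IsAdmissible β r t) (hβ : ∀ j, 0 ≤ β j)
    (hr : 0 ≤ r) : s.lo ≤ s.hi := fun j =>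
  sub_nonneg.1 ((mul_nonneg (Real.rpow_nonneg (hβ j) t) hr).trans (h.le_side j))

theorem Position.IsAdmissible.Icc_subset (h : s.IsAdmissible β r t) :
    Set.Icc s.lo s.hi ⊆ gameBox β t r s.center := by
  rw [gameBox_eq_Icc]
  exact Set.Icc_subset_Icc h.le_lo h.hi_le

theorem Position.IsAdmissible.exists_next (h : s.IsAdmissible β r t)
    (hβ : ∀ j, β j ∈ Set.Ioo (0 : ℝ) 1) (hr : 0 < r) {ν : Measure (Fin n → ℝ)} {K : ℝ≥0∞}
    (hν : ν s.cell ≤ K * volume s.cell) :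
    ∃ s' : Position n, s'.IsAdmissible β r (t + 1) ∧
      gameBox β (t + 1) r s'.center ⊆ gameBox β t r s.center ∧
      Set.Icc s'.lo s'.hi ⊆ Set.Icc s.lo s.hi ∧ ν s'.cell ≤ K * volume s'.cell := by
  have hpos (j : Fin n) : 0 < β j ^ (t + 1) * r := mul_pos (Real.rpow_pos_of_pos (hβ j).1 _) hr
  have hshrink (j : Fin n) : β j ^ (t + 1) * r ≤ β j ^ t * r := by
    gcongr ?_ * r
    exact Real.rpow_le_rpow_of_exponent_ge (hβ j).1 (hβ j).2.le (by linarith)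
  obtain ⟨lo, hi, hlo, hhi, hside, hcell⟩ := exists_subbox_measure_le hpos
    (fun j => (hshrink j).trans (h.le_side j)) hν
  choose b hb hb' using fun j => exists_Icc_subset_and_subset (hshrink j) (hside j).2.le
    ((h.le_lo j).trans (hlo j)) ((hhi j).trans (h.hi_le j))
  refine ⟨⟨b, lo, hi⟩, ⟨fun j => (hside j).1, fun j => (hside j).2.le, fun j => (hb j).1,
    fun j => (hb j).2⟩, ?_, Set.Icc_subset_Icc hlo hhi, hcell⟩
  rw [gameBox_eq_Icc, gameBox_eq_Icc]
  exact Set.Icc_subset_Icc (fun j => (hb' j).1) fun j => (hb' j).2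

theorem Position.IsAdmissible.disjoint_gameBox (h : s.IsAdmissible β r t)
    (hβ : ∀ j, β j ∈ Set.Ioo (0 : ℝ) 1) (hr : 0 ≤ r) {p : ℝ × (Fin n → ℝ)} (hp : p ∈ T)
    (hpt : p.1 ≤ t) (hT : deletionMeasure β r c T s.cell <
      ENNReal.ofReal ((∏ j, β j) ^ (-(1 - c) * p.1)) * volume s.cell) :
    Disjoint (Set.Icc s.lo s.hi) (gameBox β p.1 r p.2) := by
  by_contra hmeet
  obtain ⟨x, hx, hxp⟩ := Set.not_disjoint_iff.1 hmeet
  refine (le_deletionMeasure hp fun z hz j => ?_).not_gt hT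
  have hzI := Position.cell_subset_Icc hz
  have hside : s.hi j - s.lo j ≤ 2 * (β j ^ p.1 * r) := (h.side_le j).trans (by
    gcongr 2 * (?_ * r)
    exact Real.rpow_le_rpow_of_exponent_ge (hβ j).1 (hβ j).2.le hpt)
  have hzx : |z j - x j| ≤ 2 * (β j ^ p.1 * r) := (abs_sub_le_of_le_of_le
    (hzI.1 j) (hzI.2 j) (hx.1 j) (hx.2 j)).trans hside
  calc |z j - p.2 j| ≤ |z j - x j| + |x j - p.2 j| := abs_sub_le _ _ _
    _ ≤ 2 * (β j ^ p.1 * r) + β j ^ p.1 * r := add_le_add hzx (hxp j)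
    _ = β j ^ p.1 * (3 * r) := by ring

theorem Position.IsAdmissible.deletionMeasure_cell_le {α : ℝ} {m : ℕ}
    (h : s.IsAdmissible β r (m + 1)) (hβ : ∀ j, 0 < β j) (hr : 0 ≤ r) (hα : 0 ≤ α) (hc : 0 < c)
    (hT : LegalMove β α c m T) :
    deletionMeasure β r c T s.cell ≤
      ENNReal.ofReal (6 ^ n * α ^ c * (∏ j, β j) ^ (-(1 - c) * (m + 1))) * volume s.cell := by
  have hP : 0 < ∏ j, β j := Finset.prod_pos fun j _ => hβ j
  calc deletionMeasure β r c T s.cell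
      ≤ ENNReal.ofReal ((6 * r) ^ n) * ∑' p : T, ENNReal.ofReal ((∏ j, β j) ^ (c * p.1.1)) :=
        (measure_mono (Set.subset_univ _)).trans_eq (deletionMeasure_univ hβ hr)
    _ ≤ ENNReal.ofReal ((6 * r) ^ n) *
          ENNReal.ofReal (α ^ c * (∏ j, β j) ^ (c * (m + 1))) := by
        gcongr
        exact hT.tsum_le (fun j => (hβ j).le) hα hc
    _ = ENNReal.ofReal (6 ^ n * α ^ c * (∏ j, β j) ^ (-(1 - c) * (m + 1))) *
          ENNReal.ofReal (r ^ n * (∏ j, β j) ^ (m + 1 : ℝ)) := by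
        have hexp : (∏ j, β j) ^ (c * (m + 1)) =
            (∏ j, β j) ^ (-(1 - c) * (m + 1)) * (∏ j, β j) ^ (m + 1 : ℝ) := by
          rw [← Real.rpow_add hP]
          ring_nf
        rw [← ENNReal.ofReal_mul (by positivity), ← ENNReal.ofReal_mul (by positivity), hexp]
        ring_nf
    _ ≤ _ := by
        gcongr
        exact h.le_volume_cell (fun j => (hβ j).le) hr

end Position

section Evades

variable {n : ℕ} {β : Fin n → ℝ} {α r c K K' t : ℝ} {m : ℕ} {s : Position n}
  {T T' : Set (ℝ × (Fin n → ℝ))}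

/-- The invariant of Player I's evasion: at level `t`, the cell of `s` misses all boxes in `T`
whose level is at most `t`, and the potential of `T` has density at most `K` on it, measured in
units of the density `(∏ j, β j) ^ (-(1 - c) * t)` of a single box of level `t`. -/
structure Position.Evades (β : Fin n → ℝ) (r c K t : ℝ) (T : Set (ℝ × (Fin n → ℝ)))
    (s : Position n) : Prop extends s.IsAdmissible β r t where
  deletionMeasure_cell_le : deletionMeasure β r c T s.cell ≤
    ENNReal.ofReal (K * (∏ j, β j) ^ (-(1 - c) * t)) * volume s.cell
  disjoint_gameBox : ∀ p ∈ T, p.1 ≤ t → Disjoint (Set.Icc s.lo s.hi) (gameBox β p.1 r p.2)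

theorem Position.IsAdmissible.evades_empty (h : s.IsAdmissible β r t) : s.Evades β r c 0 t ∅ where
  toIsAdmissible := h
  deletionMeasure_cell_le := by simp [deletionMeasure]
  disjoint_gameBox := by simp

theorem Position.Evades.mono (h : s.Evades β r c K t T) (hβ : ∀ j, 0 ≤ β j) (hK : K ≤ K') :
    s.Evades β r c K' t T where
  toIsAdmissible := h.toIsAdmissible
  deletionMeasure_cell_le := h.deletionMeasure_cell_le.trans (by
    have : 0 ≤ ∏ j, β j := Finset.prod_nonneg fun j _ => hβ j
    gcongr)
  disjoint_gameBox := h.disjoint_gameBox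

theorem Position.Evades.union (h : s.Evades β r c K (m + 1) T)
    (hβ : ∀ j, β j ∈ Set.Ioo (0 : ℝ) 1) (hr : 0 ≤ r) (hα : 0 ≤ α) (hα1 : α < 1) (hc : 0 < c)
    (hK : 0 ≤ K) (hT' : LegalMove β α c m T') :
    s.Evades β r c (K + 6 ^ n * α ^ c) (m + 1) (T ∪ T') where
  toIsAdmissible := h.toIsAdmissible
  deletionMeasure_cell_le := by
    have hP : 0 ≤ ∏ j, β j := Finset.prod_nonneg fun j _ => (hβ j).1.le
    rw [add_mul, ENNReal.ofReal_add (by positivity) (by positivity), add_mul]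
    exact (deletionMeasure_union_le s.cell).trans (add_le_add h.deletionMeasure_cell_le
      (h.toIsAdmissible.deletionMeasure_cell_le (fun j => (hβ j).1) hr hα hc hT'))
  disjoint_gameBox := fun p hp hpm => hp.elim (fun hp => h.disjoint_gameBox p hp hpm)
    fun hp => absurd hpm (hT'.lt_fst hβ hα hα1 hc hp).not_ge

theorem Position.Evades.exists_next (h : s.Evades β r c K t T)
    (hβ : ∀ j, β j ∈ Set.Ioo (0 : ℝ) 1) (hr : 0 < r) (hc : c ≤ 1) (hK : K < 1) :
    ∃ s' : Position n, gameBox β (t + 1) r s'.center ⊆ gameBox β t r s.center ∧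
      Set.Icc s'.lo s'.hi ⊆ Set.Icc s.lo s.hi ∧
      s'.Evades β r c ((∏ j, β j) ^ (1 - c) * K) (t + 1) T := by
  obtain ⟨s', hs', hbox, hIcc, hν⟩ :=
    h.toIsAdmissible.exists_next hβ hr h.deletionMeasure_cell_le
  have hP : 0 < ∏ j, β j := Finset.prod_pos fun j _ => (hβ j).1
  have hP1 : ∏ j, β j ≤ 1 := Finset.prod_le_one (fun j _ => (hβ j).1.le) fun j _ => (hβ j).2.le
  refine ⟨s', hbox, hIcc, hs', ?_, fun p hp hpt => ?_⟩
  · have hexp : (∏ j, β j) ^ (-(1 - c) * t) =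
        (∏ j, β j) ^ (1 - c) * (∏ j, β j) ^ (-(1 - c) * (t + 1)) := by
      rw [← Real.rpow_add hP]
      ring_nf
    rwa [hexp, mul_left_comm, ← mul_assoc] at hν
  · rcases le_or_gt p.1 t with hle | hlt
    · exact (h.disjoint_gameBox p hp hle).mono_left hIcc
    refine hs'.disjoint_gameBox hβ hr.le hp hpt (hν.trans_lt ?_)
    have hvol : volume s'.cell ≠ 0 := ((ENNReal.ofReal_pos.2 (by positivity)).trans_le
      (hs'.le_volume_cell (fun j => (hβ j).1.le) hr.le)).ne'
    refine ENNReal.mul_lt_mul_left hvol Position.volume_cell_ne_top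
      ((ENNReal.ofReal_lt_ofReal_iff (by positivity)).2 ?_)
    calc K * (∏ j, β j) ^ (-(1 - c) * t) < (∏ j, β j) ^ (-(1 - c) * t) :=
          mul_lt_of_lt_one_left (by positivity) hK
      _ ≤ (∏ j, β j) ^ (-(1 - c) * p.1) :=
          Real.rpow_le_rpow_of_exponent_ge hP hP1 (by nlinarith)

end Evades

section Play

/-- Dependent choice with a condition `Q` on the whole history. -/
theorem exists_seq_of_snoc {X : Type*} {R : ℕ → X → X → Prop}
    {Q : ∀ m : ℕ, (Fin (m + 1) → X) → Prop} {x₀ : X} (h0 : Q 0 fun _ => x₀)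
    (hsnoc : ∀ (m : ℕ) (b : Fin (m + 1) → X), (∀ i : Fin m, R i (b i.castSucc) (b i.succ)) →
      Q m b → ∃ x, R m (b (Fin.last m)) x ∧ Q (m + 1) (Fin.snoc (α := fun _ => X) b x)) :
    ∃ B : ℕ → X, B 0 = x₀ ∧ (∀ m, R m (B m) (B (m + 1))) ∧ ∀ m, Q m fun i => B i := by
  let G (m : ℕ) (b : Fin (m + 1) → X) : Prop :=
    (∀ i : Fin m, R i (b i.castSucc) (b i.succ)) ∧ Q m b
  have hG (m : ℕ) (b : Fin (m + 1) → X) (hb : G m b) :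
      ∃ x, G (m + 1) (Fin.snoc (α := fun _ => X) b x) := by
    obtain ⟨x, hx, hQ⟩ := hsnoc m b hb.1 hb.2
    refine ⟨x, fun i => Fin.lastCases ?_ (fun i => ?_) i, hQ⟩
    · simpa only [Fin.succ_last, Fin.snoc_last, Fin.snoc_castSucc, Fin.val_last] using hx
    · simpa only [Fin.succ_castSucc, Fin.snoc_castSucc, Fin.val_castSucc] using hb.1 i
  choose next hnext using hG
  obtain ⟨H, hH0, hHs⟩ : ∃ H : ∀ m, {b : Fin (m + 1) → X // G m b}, (H 0).1 = (fun _ => x₀) ∧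
      ∀ m, (H (m + 1)).1 = Fin.snoc (α := fun _ => X) (H m).1 (next m _ (H m).2) :=
    ⟨fun m => m.rec ⟨fun _ => x₀, fun i => i.elim0, h0⟩ fun m b => ⟨_, hnext m b.1 b.2⟩,
      rfl, fun _ => rfl⟩
  have hH (m : ℕ) : (fun i : Fin (m + 1) => (H i).1 (Fin.last i)) = (H m).1 := by
    induction m with
    | zero => exact funext fun i => Fin.lastCases rfl (fun i => i.elim0) i
    | succ m ih =>
      refine funext fun i => Fin.lastCases rfl (fun i => ?_) i
      rw [hHs, Fin.snoc_castSucc]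
      exact congr_fun ih i
  refine ⟨fun m => (H m).1 (Fin.last m), congr_fun hH0 _, fun m => ?_, fun m => ?_⟩
  · have hR := (H (m + 1)).2.1 (Fin.last m)
    rwa [← hH (m + 1)] at hR
  · rw [hH]
    exact (H m).2.2

/-- The union of Player II's moves on all turns up to the last one of the history, under the
strategy `σ`. -/
def deletedUpTo {V W : Type*} (σ : ∀ m : ℕ, (Fin (m + 1) → V) → Set W) :
    ∀ m : ℕ, (Fin (m + 1) → V) → Set W
  | 0, b => σ 0 b
  | m + 1, b => deletedUpTo σ m (Fin.init b) ∪ σ (m + 1) b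

theorem subset_deletedUpTo {V W : Type*} (σ : ∀ m : ℕ, (Fin (m + 1) → V) → Set W) (b : ℕ → V)
    {m k : ℕ} (hmk : m ≤ k) : (σ m fun i => b i) ⊆ deletedUpTo σ k fun i => b i := by
  induction k, hmk using Nat.le_induction with
  | base => cases m with
    | zero => exact subset_rfl
    | succ m => exact Set.subset_union_right
  | succ k _ ih => exact ih.trans Set.subset_union_left

theorem exists_seq_of_strategy {X V W : Type*} {R : ℕ → X → X → Prop} {L : ℕ → Set W → Prop}
    {Q : ℕ → X → Set W → Prop} {f : X → V} {σ : ∀ m : ℕ, (Fin (m + 1) → V) → Set W} {x₀ : X}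
    (hσ : ∀ (m : ℕ) (b : Fin (m + 1) → X), (∀ i : Fin m, R i (b i.castSucc) (b i.succ)) →
      L m (σ m fun i => f (b i)))
    (h0 : ∀ T, L 0 T → Q 0 x₀ T)
    (hsucc : ∀ m x T, Q m x T → ∃ x', R m x x' ∧ ∀ T', L (m + 1) T' → Q (m + 1) x' (T ∪ T')) :
    ∃ B : ℕ → X, B 0 = x₀ ∧ (∀ m, R m (B m) (B (m + 1))) ∧
      ∀ m, Q m (B m) (deletedUpTo σ m fun i => f (B i)) := by
  refine exists_seq_of_snoc
    (Q := fun m b => Q m (b (Fin.last m)) (deletedUpTo σ m fun i => f (b i)))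
    (h0 _ (hσ 0 (fun _ => x₀) fun i => i.elim0)) fun m b hb hQ => ?_
  obtain ⟨x, hx, hQx⟩ := hsucc m _ _ hQ
  refine ⟨x, hx, ?_⟩
  set b' : Fin (m + 2) → X := Fin.snoc (α := fun _ => X) b x
  have hlast : b' (Fin.last (m + 1)) = x := Fin.snoc_last (α := fun _ => X) _ _
  have hcast (i : Fin (m + 1)) : b' i.castSucc = b i := Fin.snoc_castSucc (α := fun _ => X) _ _ i
  have hinit : (Fin.init fun i => f (b' i)) = fun i => f (b i) := funext fun i =>
    congrArg f (hcast i)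
  have hlegal : L (m + 1) (σ (m + 1) fun i => f (b' i)) := by
    refine hσ (m + 1) b' (Fin.lastCases ?_ fun i => ?_)
    · simpa [hlast, hcast] using hx
    · simpa only [Fin.succ_castSucc, hcast, Fin.val_castSucc] using hb i
  rw [hlast, deletedUpTo, hinit]
  exact hQx _ hlegal

theorem Position.exists_isAdmissible_center_eq {n : ℕ} {β : Fin n → ℝ} {r t : ℝ}
    (hβ : ∀ j, 0 ≤ β j) (hr : 0 ≤ r) (y : Fin n → ℝ) :
    ∃ s : Position n, s.IsAdmissible β r t ∧ s.center = y := by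
  refine ⟨⟨y, fun j => y j - β j ^ t * r, fun j => y j + β j ^ t * r⟩,
    ⟨fun j => ?_, fun j => ?_, fun _ => le_rfl, fun _ => le_rfl⟩, rfl⟩
  · linarith [mul_nonneg (Real.rpow_nonneg (hβ j) t) hr]
  · linarith

variable {n : ℕ} {β : Fin n → ℝ} {α c r : ℝ}

theorem alpha_lt_one_of_gap (hβ : ∀ j, β j ∈ Set.Ioo (0 : ℝ) 1) (hc : 0 < c)
    (h : 6 ^ n * α ^ c < 1 - (∏ j, β j) ^ (1 - c)) : α < 1 := by
  by_contra! hα1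
  have h6 : (1 : ℝ) ≤ 6 ^ n := one_le_pow₀ (by norm_num)
  have hαc : 1 ≤ α ^ c := Real.one_le_rpow hα1 hc.le
  have hP : 0 < (∏ j, β j) ^ (1 - c) := Real.rpow_pos_of_pos (Finset.prod_pos fun j _ => (hβ j).1) _
  linarith [one_le_mul_of_one_le_of_one_le h6 hαc]

theorem exponent_lt_one_of_gap (hβ : ∀ j, β j ∈ Set.Ioo (0 : ℝ) 1) (hα : 0 ≤ α)
    (h : 6 ^ n * α ^ c < 1 - (∏ j, β j) ^ (1 - c)) : c < 1 := by
  by_contra! hc1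
  have hP : 1 ≤ (∏ j, β j) ^ (1 - c) := Real.one_le_rpow_of_pos_of_le_one_of_nonpos
    (Finset.prod_pos fun j _ => (hβ j).1)
    (Finset.prod_le_one (fun j _ => (hβ j).1.le) fun j _ => (hβ j).2.le) (by linarith)
  have : 0 ≤ 6 ^ n * α ^ c := by positivity
  linarith

/-- The threshold `6 ^ n * α ^ c / (1 - P ^ (1 - c))`, where `P = ∏ j, β j`, is the fixed point of
the recursion `K ↦ P ^ (1 - c) * K + 6 ^ n * α ^ c` for the potential along the play. -/
theorem exists_evading_play (hβ : ∀ j, β j ∈ Set.Ioo (0 : ℝ) 1) (hα : 0 ≤ α) (hc : 0 < c)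
    (hr : 0 < r) (h : 6 ^ n * α ^ c < 1 - (∏ j, β j) ^ (1 - c))
    {σ : ∀ m : ℕ, (Fin (m + 1) → Fin n → ℝ) → Set (ℝ × (Fin n → ℝ))}
    (hσ : ∀ (m : ℕ) (b : Fin (m + 1) → Fin n → ℝ),
      (∀ i : Fin m, gameBox β (i + 2) r (b i.succ) ⊆ gameBox β (i + 1) r (b i.castSucc)) →
      LegalMove β α c m (σ m b)) (y : Fin n → ℝ) :
    ∃ (K : ℝ) (s : ℕ → Position n), (s 0).center = y ∧
      (∀ m : ℕ, gameBox β (m + 2) r (s (m + 1)).center ⊆ gameBox β (m + 1) r (s m).center ∧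
        Set.Icc (s (m + 1)).lo (s (m + 1)).hi ⊆ Set.Icc (s m).lo (s m).hi) ∧
      ∀ m : ℕ, (s m).Evades β r c K (m + 1) (deletedUpTo σ m fun i => (s i).center) := by
  have hP : 0 < ∏ j, β j := Finset.prod_pos fun j _ => (hβ j).1
  have hgap : 0 < 1 - (∏ j, β j) ^ (1 - c) := lt_of_le_of_lt (by positivity) h
  have hα1 : α < 1 := alpha_lt_one_of_gap hβ hc h
  have hc1 : c < 1 := exponent_lt_one_of_gap hβ hα h
  set K : ℝ := 6 ^ n * α ^ c / (1 - (∏ j, β j) ^ (1 - c))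
  have hK0 : 0 ≤ K := by positivity
  have hK1 : K < 1 := (div_lt_one hgap).2 h
  have hKfix : (∏ j, β j) ^ (1 - c) * K + 6 ^ n * α ^ c = K := by
    linarith [div_mul_cancel₀ (6 ^ n * α ^ c) hgap.ne']
  obtain ⟨s₀, hs₀, hs₀y⟩ : ∃ s₀ : Position n, s₀.IsAdmissible β r ((0 : ℕ) + 1) ∧ s₀.center = y :=
    Position.exists_isAdmissible_center_eq (fun j => (hβ j).1.le) hr.le y
  have hstart (T : Set (ℝ × (Fin n → ℝ))) (hT : LegalMove β α c 0 T) :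
      s₀.Evades β r c K ((0 : ℕ) + 1) T := by
    have h0 := (hs₀.evades_empty (c := c)).union hβ hr.le hα hα1 hc le_rfl hT
    rw [Set.empty_union] at h0
    refine h0.mono (fun j => (hβ j).1.le) ?_
    linarith [mul_nonneg (Real.rpow_nonneg hP.le (1 - c)) hK0]
  obtain ⟨s, hs0, hR, hQ⟩ := exists_seq_of_strategy (f := Position.center)
    (R := fun m s s' => gameBox β (m + 2) r s'.center ⊆ gameBox β (m + 1) r s.center ∧
      Set.Icc s'.lo s'.hi ⊆ Set.Icc s.lo s.hi)
    (Q := fun m s T => s.Evades β r c K (m + 1) T)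
    (fun m b hb => hσ m _ fun i => (hb i).1) hstart fun m s T hs => by
      obtain ⟨s', hbox, hIcc, hs'⟩ := hs.exists_next hβ hr hc1.le hK1
      rw [add_assoc, one_add_one_eq_two] at hbox
      refine ⟨s', ⟨hbox, hIcc⟩, fun T' hT' => ?_⟩
      rw [← Nat.cast_add_one] at hs'
      have hunion := hs'.union hβ hr.le hα hα1 hc (by positivity) hT'
      rwa [hKfix] at hunion
  exact ⟨K, s, by rw [hs0, hs₀y], hR, hQ⟩

theorem IsWinning.inter_gameBox_nonempty {ρ₂ ρ₁ : ℝ} {S : Set (Fin n → ℝ)}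
    (hβ : ∀ j, β j ∈ Set.Ioo (0 : ℝ) 1) (hα : 0 ≤ α) (hc : 0 < c) (hρ₂ : 0 < ρ₂) (hρ : ρ₂ ≤ ρ₁)
    (h : 6 ^ n * α ^ c < 1 - (∏ j, β j) ^ (1 - c)) (hS : IsWinning β α c ρ₂ ρ₁ S)
    (y : Fin n → ℝ) : (S ∩ gameBox β 1 ρ₂ y).Nonempty := by
  obtain ⟨σ, hlegal, hwin⟩ := hS
  obtain ⟨K, s, hs0, hnext, hs⟩ := exists_evading_play hβ hα hc hρ₂ h
    (fun m b => hlegal ρ₂ m b le_rfl hρ) y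
  have hβ0 (j : Fin n) : 0 ≤ β j := (hβ j).1.le
  obtain ⟨x, hx⟩ : (⋂ m, Set.Icc (s m).lo (s m).hi).Nonempty :=
    IsCompact.nonempty_iInter_of_sequence_nonempty_isCompact_isClosed _ (fun m => (hnext m).2)
      (fun m => Set.nonempty_Icc.2 ((hs m).toIsAdmissible.lo_le_hi hβ0 hρ₂.le)) isCompact_Icc
      fun _ => isClosed_Icc
  simp only [Set.mem_iInter] at hx
  have hxbox (m : ℕ) : x ∈ gameBox β (m + 1) ρ₂ (s m).center := (hs m).Icc_subset (hx m)
  refine ⟨x, hwin ρ₂ (fun m => (s m).center) le_rfl hρ (fun m => (hnext m).1) x hxbox ?_, ?_⟩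
  · simp only [Set.mem_iUnion, not_exists]
    intro m p hp hxp
    obtain ⟨k, hk⟩ := exists_nat_ge p.1
    have hpk : p ∈ deletedUpTo (σ ρ₂) (max m k) fun i => (s i).center :=
      subset_deletedUpTo (σ ρ₂) (fun m => (s m).center) (le_max_left m k) hp
    have hkm : (k : ℝ) ≤ max m k := mod_cast le_max_right m k
    exact Set.disjoint_left.1 ((hs (max m k)).disjoint_gameBox p hpk (by linarith)) (hx _) hxp
  · simpa [hs0] using hxbox 0

end Play

section NullSets

variable {n : ℕ} {β : Fin n → ℝ} {α α' c d r : ℝ} {N : Set (Fin n → ℝ)}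

theorem exists_closedBall_subset_gameBox (hβ : ∀ j, 0 < β j) (hP1 : ∏ j, β j < 1) (hc : 0 < c)
    (hd : 0 < d) (hdβ : ∀ j, (∏ j, β j) ^ c ≤ β j ^ d) (hr : 0 < r) {s : ℝ} (hs : 0 < s)
    (hsr : (s / r) ^ d ≤ (∏ j, β j) ^ c) (z : Fin n → ℝ) :
    ∃ q : ℝ, 1 ≤ q ∧ Metric.closedBall z s ⊆ gameBox β q r z ∧
      (∏ j, β j ^ q) ^ c = (s / r) ^ d := by
  have hP : 0 < ∏ j, β j := Finset.prod_pos fun j _ => hβ j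
  have hsd : 0 < (s / r) ^ d := by positivity
  set q : ℝ := Real.logb (∏ j, β j) ((s / r) ^ d) / c
  have hq : ((∏ j, β j) ^ c) ^ q = (s / r) ^ d := by
    rw [← Real.rpow_mul hP.le, mul_div_cancel₀ _ hc.ne', Real.rpow_logb hP hP1.ne hsd]
  have hq1 : 1 ≤ q := by
    rwa [one_le_div hc, Real.le_logb_iff_rpow_le_of_base_lt_one hP hP1 hsd]
  refine ⟨q, hq1, fun x hx j => ?_, ?_⟩
  · have hsβ : s / r ≤ β j ^ q := by
      rw [← Real.rpow_le_rpow_iff (by positivity) (Real.rpow_nonneg (hβ j).le q) hd, ← hq,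
        ← Real.rpow_mul (hβ j).le, mul_comm q, Real.rpow_mul (hβ j).le]
      exact Real.rpow_le_rpow (by positivity) (hdβ j) (by linarith)
    exact ((dist_le_pi_dist x z j).trans hx).trans ((div_le_iff₀ hr).1 hsβ)
  · rw [Real.finsetProd_rpow _ _ fun j _ => (hβ j).le, ← Real.rpow_mul hP.le, mul_comm,
      Real.rpow_mul hP.le, hq]

theorem exists_gameBox_cover_of_hausdorffMeasure_eq_zero (hβ : ∀ j, 0 < β j)
    (hP1 : ∏ j, β j < 1) (hc : 0 < c) (hd : 0 < d) (hdβ : ∀ j, (∏ j, β j) ^ c ≤ β j ^ d)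
    (hr : 0 < r) (hN : μH[d] N = 0) {ε : ℝ} (hε : 0 < ε) :
    ∃ E : Set (ℝ × (Fin n → ℝ)), E.Countable ∧ (∀ p ∈ E, 1 ≤ p.1) ∧
      N ⊆ ⋃ p ∈ E, gameBox β p.1 r p.2 ∧
      ∑' p : E, ENNReal.ofReal ((∏ j, β j ^ p.1.1) ^ c) ≤ ENNReal.ofReal ε := by
  have hP : 0 < ∏ j, β j := Finset.prod_pos fun j _ => hβ j
  set η : ℝ := min ε ((∏ j, β j) ^ c)
  have hη0 : 0 < η := lt_min hε (by positivity)
  have hrd : 0 < r ^ d := by positivity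
  obtain ⟨z, s, hs, hNs, hsum⟩ := exists_closedBall_cover_of_hausdorffMeasure_eq_zero hd hN
    (ENNReal.ofReal_pos.2 (mul_pos hη0 hrd)).ne'
  have hscale (i : ℕ) : (s i / r) ^ d = s i ^ d * (r ^ d)⁻¹ := by
    rw [Real.div_rpow (hs i).le hr.le, div_eq_mul_inv]
  have hsum' : ∑' i, ENNReal.ofReal ((s i / r) ^ d) ≤ ENNReal.ofReal η := by
    simp only [hscale, ENNReal.ofReal_mul' (inv_nonneg.2 hrd.le)]
    rw [ENNReal.tsum_mul_right]
    refine (mul_le_mul_left hsum.le _).trans_eq ?_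
    rw [← ENNReal.ofReal_mul (by positivity), mul_inv_cancel_right₀ hrd.ne']
  have hsr (i : ℕ) : (s i / r) ^ d ≤ (∏ j, β j) ^ c :=
    ((ENNReal.ofReal_le_ofReal_iff hη0.le).1 ((ENNReal.le_tsum i).trans hsum')).trans
      (min_le_right _ _)
  choose q hq1 hball hq using fun i =>
    exists_closedBall_subset_gameBox hβ hP1 hc hd hdβ hr (hs i) (hsr i) (z i)
  refine ⟨Set.range fun i => (q i, z i), Set.countable_range _, Set.forall_mem_range.2 hq1, ?_, ?_⟩
  · rw [Set.biUnion_range]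
    exact hNs.trans (Set.iUnion_mono hball)
  · refine (ENNReal.tsum_le_tsum_comp_of_surjective Set.rangeFactorization_surjective
      fun p : Set.range fun i => (q i, z i) =>
        ENNReal.ofReal ((∏ j, β j ^ p.1.1) ^ c)).trans ?_
    simp only [Set.rangeFactorization_coe, hq]
    exact hsum'.trans (ENNReal.ofReal_le_ofReal (min_le_left _ _))

theorem IsWinning.diff_of_hausdorffMeasure_eq_zero {ρ₂ ρ₁ : ℝ} {S : Set (Fin n → ℝ)}
    (hβ : ∀ j, 0 < β j) (hP1 : ∏ j, β j < 1) (hα : 0 ≤ α) (hαα' : α < α') (hc : 0 < c)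
    (hd : 0 < d) (hdβ : ∀ j, (∏ j, β j) ^ c ≤ β j ^ d) (hρ₂ : 0 < ρ₂) (hN : μH[d] N = 0)
    (hS : IsWinning β α c ρ₂ ρ₁ S) : IsWinning β α' c ρ₂ ρ₁ (S \ N) := by
  obtain ⟨σ, hlegal, hwin⟩ := hS
  have hβ0 (j : Fin n) : 0 ≤ β j := (hβ j).le
  set Q : ℝ := ∏ j, β j ^ ((0 : ℕ) + 1 : ℝ)
  have hQ : 0 < Q := Finset.prod_pos fun j _ => Real.rpow_pos_of_pos (hβ j) _
  have hgap : 0 < (α' * Q) ^ c - (α * Q) ^ c := by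
    rw [sub_pos]
    gcongr
  obtain ⟨E, hE, hE1, hNE, hEsum⟩ :=
    exists_gameBox_cover_of_hausdorffMeasure_eq_zero hβ hP1 hc hd hdβ hρ₂ hN hgap
  rw [ENNReal.ofReal_sub _ (by positivity)] at hEsum
  refine ⟨fun r m b => σ r m b ∪ if m = 0 then E else ∅, fun r m b hr₂ hr₁ hb => ?_,
    fun r b hr₂ hr₁ hb x hx hxdel => ?_⟩
  · rcases m with - | m
    · exact (hlegal r 0 b hr₂ hr₁ hb).union hα hαα'.le hβ0 hc hE hE1 hEsum
    · exact (hlegal r (m + 1) b hr₂ hr₁ hb).union hα hαα'.le hβ0 hc (by simp) (by simp) (by simp)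
  · simp only [Set.mem_iUnion, not_exists, Set.mem_union] at hxdel
    refine ⟨hwin r b hr₂ hr₁ hb x hx ?_, fun hxN => ?_⟩
    · simpa only [Set.mem_iUnion, not_exists] using fun m p hp => hxdel m p (.inl hp)
    · obtain ⟨p, hp, hxp⟩ := Set.mem_iUnion₂.1 (hNE hxN)
      exact hxdel 0 p (.inr hp) (gameBox_mono_radius hβ0 hr₂ p.2 hxp)

end NullSets

section Dimension

variable {n : ℕ} {β : Fin n → ℝ} {α c δ : ℝ}

theorem prod_le_of_mem_Ioo (hβ : ∀ j, β j ∈ Set.Ioo (0 : ℝ) 1) (i : Fin n) : ∏ j, β j ≤ β i := by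
  rw [← Finset.mul_prod_erase _ _ (Finset.mem_univ i)]
  exact mul_le_of_le_one_right (hβ i).1.le
    (Finset.prod_le_one (fun j _ => (hβ j).1.le) fun j _ => (hβ j).2.le)

theorem eight_pow_mul_lt_one (hβ : ∀ j, β j ∈ Set.Ioo (0 : ℝ) (1 / 5)) (hα : 0 < α) (hαδ : α ≤ δ)
    (h : (3 : ℝ)⁻¹ ^ n * ∏ j, (1 - 5 * β j ^ ⌊δ / α⌋₊) > 8 ^ n * (1 + 2 ^ (2 * n + 1)) * δ) :
    8 ^ n * δ < 1 := by
  have hfloor : ⌊δ / α⌋₊ ≠ 0 := (Nat.floor_pos.2 ((one_le_div hα).2 hαδ)).ne'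
  have hprod : ∏ j, (1 - 5 * β j ^ ⌊δ / α⌋₊) ≤ 1 := by
    refine Finset.prod_le_one (fun j _ => ?_) fun j _ => ?_
    · linarith [pow_le_of_le_one (hβ j).1.le (by linarith [(hβ j).2]) hfloor, (hβ j).2]
    · linarith [pow_pos (hβ j).1 ⌊δ / α⌋₊]
  have h3 : (3 : ℝ)⁻¹ ^ n ≤ 1 := pow_le_one₀ (by norm_num) (by norm_num)
  have hδ : 0 < δ := hα.trans_le hαδ
  calc 8 ^ n * δ ≤ 8 ^ n * (1 + 2 ^ (2 * n + 1)) * δ := by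
        gcongr
        exact le_mul_of_one_le_right (by positivity) (le_add_of_nonneg_right (by positivity))
    _ < (3 : ℝ)⁻¹ ^ n * ∏ j, (1 - 5 * β j ^ ⌊δ / α⌋₊) := h
    _ ≤ (3 : ℝ)⁻¹ ^ n := mul_le_of_le_one_right (by positivity) hprod
    _ ≤ 1 := h3

theorem six_pow_mul_rpow_lt (hβ : ∀ j, β j ∈ Set.Ioo (0 : ℝ) (1 / 5))
    (hα : α ∈ Set.Ioo (0 : ℝ) 1) (hc : c ≤ 1) (hδ : δ ∈ Set.Ioo (0 : ℝ) 1)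
    (h1 : α ^ c ≤ δ ^ 2 * (1 - (∏ j, β j) ^ (1 - c)))
    (h2 : (3 : ℝ)⁻¹ ^ n * ∏ j, (1 - 5 * β j ^ ⌊δ / α⌋₊) > 8 ^ n * (1 + 2 ^ (2 * n + 1)) * δ) :
    6 ^ n * α ^ c < 1 - (∏ j, β j) ^ (1 - c) := by
  obtain ⟨hδ0, hδ1⟩ := hδ
  set g : ℝ := 1 - (∏ j, β j) ^ (1 - c)
  have hP : 0 < ∏ j, β j := Finset.prod_pos fun j _ => (hβ j).1
  have hg : 0 < g :=
    pos_of_mul_pos_right ((Real.rpow_pos_of_pos hα.1 c).trans_le h1) (by positivity)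
  have hg1 : g ≤ 1 := sub_le_self _ (by positivity)
  have hαδ : α ≤ δ := calc
    α = α ^ (1 : ℝ) := (Real.rpow_one α).symm
    _ ≤ α ^ c := Real.rpow_le_rpow_of_exponent_ge hα.1 hα.2.le hc
    _ ≤ δ ^ 2 * g := h1
    _ ≤ δ := by nlinarith
  have hδ6 : (6 : ℝ) ^ n * δ < 1 := lt_of_le_of_lt (by gcongr; norm_num)
    (eight_pow_mul_lt_one hβ hα.1 hαδ h2)
  calc 6 ^ n * α ^ c ≤ 6 ^ n * (δ ^ 2 * g) := by gcongr
    _ = (6 ^ n * δ) * (δ * g) := by ring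
    _ ≤ δ * g := mul_le_of_le_one_left (by positivity) hδ6.le
    _ < g := mul_lt_of_lt_one_left hg hδ1

/-- The exponent `d = c` always qualifies; for equal entries `β j`, so does `d = n * c`. -/
theorem winning_set_positive_dimension_general {ρ₂ d : ℝ} (hβ : ∀ j, β j ∈ Set.Ioo (0 : ℝ) 1)
    (hα : 0 ≤ α) (hc : 0 < c) (h : 6 ^ n * α ^ c < 1 - (∏ j, β j) ^ (1 - c)) (hρ₂ : 0 < ρ₂)
    (hd : 0 < d) (hdβ : ∀ j, (∏ j, β j) ^ c ≤ β j ^ d) {S : Set (Fin n → ℝ)}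
    (hS : S ∈ winFamily β α c ρ₂) (y : Fin n → ℝ) :
    ENNReal.ofReal d ≤ dimH (S ∩ gameBox β 1 ρ₂ y) := by
  obtain ⟨ρ₁, hρ, hwin⟩ := hS
  have hP1 : ∏ j, β j < 1 := by
    refine (Finset.prod_le_one (fun j _ => (hβ j).1.le) fun j _ => (hβ j).2.le).lt_of_ne
      fun hP => ?_
    rw [hP, Real.one_rpow, sub_self] at h
    exact h.not_ge (by positivity)
  obtain ⟨α', hα', hαα'⟩ : ∃ α', 6 ^ n * α' ^ c < 1 - (∏ j, β j) ^ (1 - c) ∧ α < α' := by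
    have hcont : Continuous fun a : ℝ => 6 ^ n * a ^ c :=
      continuous_const.mul (Real.continuous_rpow_const hc.le)
    exact (((hcont.tendsto α).eventually_lt_const h).filter_mono nhdsWithin_le_nhds |>.and
      (self_mem_nhdsWithin (s := Set.Ioi α))).exists
  refine le_dimH_of_hausdorffMeasure_ne_zero fun hN => ?_
  rw [Real.coe_toNNReal d hd.le] at hN
  obtain ⟨x, ⟨hxS, hx⟩, hxbox⟩ := (hwin.diff_of_hausdorffMeasure_eq_zero (fun j => (hβ j).1) hP1 hα
    hαα' hc hd hdβ hρ₂ hN).inter_gameBox_nonempty hβ (hα.trans hαα'.le) hc hρ₂ hρ hα' y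
  exact hx ⟨hxS, hxbox⟩

end Dimension

/-- **Positive Hausdorff dimension of winning sets.**  Under the hypotheses of the main
dimension theorem, if in addition `α < K₁⁻¹ · n · log(1/β_max)`, then for every
`S ∈ 𝒮(α, A, c, ρ₂)` and every `y ∈ ℝⁿ`, `dim_H (S ∩ (A(B[0,ρ₂]) + y)) > 0`. -/
theorem winning_set_positive_dimension {n : ℕ} (hn : 0 < n)
    (β : Fin n → ℝ) (hβ : ∀ j, β j ∈ Set.Ioo (0 : ℝ) (1 / 5))
    (α c : ℝ) (hα : α ∈ Set.Ioo (0 : ℝ) 1) (hc : c ∈ Set.Ioo (0 : ℝ) 1)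
    (ρ₂ : ℝ) (hρ₂ : 0 < ρ₂) (δ : ℝ) (hδ : δ ∈ Set.Ioo (0 : ℝ) 1)
    (h1 : α ^ c ≤ δ ^ 2 * (1 - (∏ j, β j) ^ (1 - c)))
    (h2 : (3 : ℝ)⁻¹ ^ n * ∏ j, (1 - 5 * β j ^ ⌊δ / α⌋₊)
            > 8 ^ n * (1 + 2 ^ (2 * n + 1)) * δ)
    (βmax : ℝ) (hβmax : IsGreatest (Set.range β) βmax)
    (K₁ : ℝ)
    (hK₁ : K₁ = 2 * δ⁻¹ *
      |Real.log ((3 : ℝ)⁻¹ ^ n * ∏ j, (1 - 5 * β j ^ ⌊δ / α⌋₊)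
          - 8 ^ n * (1 + 2 ^ (2 * n + 1)) * δ)|)
    (hα2 : α < K₁⁻¹ * n * Real.log βmax⁻¹)
    (S : Set (Fin n → ℝ)) (hS : S ∈ winFamily β α c ρ₂) (y : Fin n → ℝ) :
    0 < dimH (S ∩ gameBox β 1 ρ₂ y) := by
  have hβ1 (j : Fin n) : β j ∈ Set.Ioo (0 : ℝ) 1 := ⟨(hβ j).1, by linarith [(hβ j).2]⟩
  have hprod : 0 ≤ ∏ j, β j := Finset.prod_nonneg fun j _ => (hβ j).1.le
  have hβc (j : Fin n) : (∏ j, β j) ^ c ≤ β j ^ c :=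
    Real.rpow_le_rpow hprod (prod_le_of_mem_Ioo hβ1 j) hc.1.le
  have hgap := six_pow_mul_rpow_lt hβ hα hc.2.le hδ h1 h2
  exact (ENNReal.ofReal_pos.2 hc.1).trans_le
    (winning_set_positive_dimension_general hβ1 hα.1.le hc.1 hgap hρ₂ hc.1 hβc hS y)
end
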